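/- Let d ≥ 1 and let Ω ⊆ ℝ^d be an open set. There is a constant C depending only on d such that for every f ∈ L¹_loc(Ω) with var_Ω f < ∞, the dyadic local maximal function M_Ω f belongs to L¹_loc(Ω) and var_Ω (M_Ω f) ≤ C · var_Ω f. -/

import Mathlib

open MeasureTheory Metric Set Filter
open scoped ENNReal Topology

noncomputable section

/-- `ℝ^d` as Euclidean space. -/
abbrev Ed (d : ℕ) := EuclideanSpace ℝ (Fin d)

/-- A dyadic cube `∏_i [2^n m_i, 2^n (m_i + 1))`. -/
def IsDyadicCube {d : ℕ} (Q : Set (Ed d)) : Prop :=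
  ∃ (n : ℤ) (m : Fin d → ℤ),
    Q = {x : Ed d | ∀ i, x i ∈ Set.Ico ((2:ℝ)^n * m i) ((2:ℝ)^n * (m i + 1))}

/-- Divergence of a vector field `φ : ℝ^d → ℝ^d`. -/
def divergence {d : ℕ} (φ : Ed d → Ed d) (x : Ed d) : ℝ :=
  ∑ i, fderiv ℝ φ x (EuclideanSpace.single i 1) i

/-- The variation of `f` in `Ω`:
`var_Ω f = sup { ∫_Ω f · div φ : φ ∈ C¹_c(Ω; ℝ^d), |φ| ≤ 1 }`. -/
def var {d : ℕ} (Ω : Set (Ed d)) (f : Ed d → ℝ) : ℝ≥0∞ :=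
  ⨆ φ ∈ {φ : Ed d → Ed d | ContDiff ℝ 1 φ ∧ HasCompactSupport φ ∧ tsupport φ ⊆ Ω ∧
      ∀ x, ‖φ x‖ ≤ 1},
    ENNReal.ofReal (∫ x in Ω, f x * divergence φ x)

/-- The dyadic local maximal function
`M_Ω f(x) = sup { ⨍_Q f : Q dyadic cube, x ∈ Q, closure Q ⊆ Ω }`. -/
def dyadicMaxFun {d : ℕ} (Ω : Set (Ed d)) (f : Ed d → ℝ) (x : Ed d) : ℝ :=
  sSup {y : ℝ | ∃ Q : Set (Ed d), IsDyadicCube Q ∧ x ∈ Q ∧ closure Q ⊆ Ω ∧ y = ⨍ z in Q, f z}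

namespace DyadicGrid

variable {d : ℕ}

/-- The discrete box of side `N` with lower corner `a`. -/
def box (a : Fin d → ℤ) (N : ℕ) : Finset (Fin d → ℤ) :=
  Fintype.piFinset fun i => Finset.Ico (a i) (a i + N)

/-- The neighbour of `x` in direction `j`. -/
def nbr (j : Fin d) (x : Fin d → ℤ) : Fin d → ℤ := Function.update x j (x j + 1)

/-- The faces in direction `j` interior to the finite set `B`, indexed by their lower cell. -/
def faces (B : Finset (Fin d → ℤ)) (j : Fin d) : Finset (Fin d → ℤ) :=
  {x ∈ B | nbr j x ∈ B}

/-- The variation of `u` in the interior of the finite set `B`. -/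
def bvar (u : (Fin d → ℤ) → ℝ) (B : Finset (Fin d → ℤ)) : ℝ :=
  ∑ j, ∑ x ∈ faces B j, |u (nbr j x) - u x|

/-- The variation of `u` on the line through `z` in direction `j`. -/
def lineVar (u : (Fin d → ℤ) → ℝ) (a : Fin d → ℤ) (N : ℕ) (j : Fin d) (z : Fin d → ℤ) : ℝ :=
  ∑ t ∈ Finset.Ico (a j) (a j + N - 1),
    |u (Function.update z j (t + 1)) - u (Function.update z j t)|

theorem mem_box {a : Fin d → ℤ} {N : ℕ} {x : Fin d → ℤ} :
    x ∈ box a N ↔ ∀ i, a i ≤ x i ∧ x i < a i + N := by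
  simp [box, Fintype.mem_piFinset]

theorem card_box (a : Fin d → ℤ) (N : ℕ) : (box a N).card = N ^ d := by
  simp [box, Fintype.card_piFinset]

theorem mem_faces {B : Finset (Fin d → ℤ)} {j : Fin d} {x : Fin d → ℤ} :
    x ∈ faces B j ↔ x ∈ B ∧ nbr j x ∈ B := Finset.mem_filter

theorem piecewise_insert_eq (T : Finset (Fin d)) (x y : Fin d → ℤ) (j : Fin d) :
    (insert j T).piecewise y x = Function.update (T.piecewise y x) j (y j) := by
  ext l
  by_cases hl : l = j
  · subst hl; simp
  · simp [Finset.piecewise, hl]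

theorem update_mem_box {a : Fin d → ℤ} {N : ℕ} {x : Fin d → ℤ} (hx : x ∈ box a N) {j : Fin d}
    {t : ℤ} (h1 : a j ≤ t) (h2 : t < a j + N) : Function.update x j t ∈ box a N := by
  rw [mem_box] at *
  intro i
  by_cases h : i = j
  · subst h; simp [h1, h2]
  · simpa [h] using hx i

theorem abs_sub_le_sum_Ico (h : ℤ → ℝ) {s t : ℤ} (hst : s ≤ t) :
    |h s - h t| ≤ ∑ r ∈ Finset.Ico s t, |h (r + 1) - h r| := by
  induction t, hst using Int.leInduction with
  | base => simp
  | succ t hst ih =>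
    rw [← Finset.insert_Ico_right_eq_Ico_add_one hst, Finset.sum_insert (by simp)]
    have : |h s - h (t + 1)| ≤ |h s - h t| + |h (t + 1) - h t| := by
      rw [abs_sub_comm (h (t + 1))]; exact abs_sub_le _ _ _
    linarith

theorem abs_sub_update_le_lineVar (u : (Fin d → ℤ) → ℝ) (a : Fin d → ℤ) (N : ℕ) (j : Fin d)
    {z : Fin d → ℤ} (hz : z ∈ box a N) {t : ℤ} (h1 : a j ≤ t) (h2 : t < a j + N) :
    |u z - u (Function.update z j t)| ≤ lineVar u a N j z := by
  have key : ∀ s t : ℤ, s ≤ t → a j ≤ s → t < a j + N →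
      |u (Function.update z j s) - u (Function.update z j t)| ≤ lineVar u a N j z := by
    intro s t hst hs ht
    refine (abs_sub_le_sum_Ico (fun r => u (Function.update z j r)) hst).trans ?_
    refine Finset.sum_le_sum_of_subset_of_nonneg (Finset.Ico_subset_Ico hs (by omega)) ?_
    intros; positivity
  have hzj := (mem_box.1 hz) j
  rcases le_total (z j) t with h | h
  · simpa using key (z j) t h hzj.1 h2
  · rw [abs_sub_comm]; simpa using key t (z j) h h1 hzj.2

theorem sum_lineVar_slab_le (u : (Fin d → ℤ) → ℝ) (a : Fin d → ℤ) (N : ℕ) (j : Fin d) (c : ℤ) :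
    ∑ z ∈ box a N with z j = c, lineVar u a N j z ≤
      ∑ x ∈ faces (box a N) j, |u (nbr j x) - u x| := by
  classical
  unfold lineVar
  rw [← Finset.sum_product']
  set P := ({z ∈ box a N | z j = c} ×ˢ Finset.Ico (a j) (a j + N - 1)) with hP
  have hinj : Set.InjOn (fun p : (Fin d → ℤ) × ℤ => Function.update p.1 j p.2) P := by
    rintro ⟨z, t⟩ hz ⟨w, s⟩ hw h
    simp only [hP, Finset.coe_product, Set.mem_prod, Finset.mem_coe, Finset.mem_filter] at hz hw
    have hts : t = s := by simpa using congrFun h j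
    have hzw : z = w := by
      ext i
      by_cases hi : i = j
      · subst hi; rw [hz.1.2, hw.1.2]
      · simpa [hi] using congrFun h i
    rw [hts, hzw]
  have := Finset.sum_image (s := P) (f := fun x => |u (nbr j x) - u x|) hinj
  simp only [nbr, Function.update_idem, Function.update_self] at this
  rw [← this]
  refine Finset.sum_le_sum_of_subset_of_nonneg ?_ (by intros; positivity)
  intro x hx
  simp only [hP, Finset.mem_image, Finset.mem_product, Finset.mem_filter, Finset.mem_Ico] at hx
  obtain ⟨⟨z, t⟩, ⟨⟨hz, -⟩, ht1, ht2⟩, rfl⟩ := hx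
  refine mem_faces.2 ⟨update_mem_box hz ht1 (by omega), ?_⟩
  simp only [nbr, Function.update_idem, Function.update_self]
  exact update_mem_box hz (by omega) (by omega)

theorem sum_lineVar_le (u : (Fin d → ℤ) → ℝ) (a : Fin d → ℤ) (N : ℕ) (j : Fin d) :
    ∑ z ∈ box a N, lineVar u a N j z ≤
      N * ∑ x ∈ faces (box a N) j, |u (nbr j x) - u x| := by
  classical
  rw [← Finset.sum_fiberwise_of_maps_to (s := box a N) (t := Finset.Ico (a j) (a j + N))
    (g := fun z => z j) (fun z hz => by simpa using mem_box.1 hz j)]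
  refine (Finset.sum_le_card_nsmul _ _ _ fun c _ => sum_lineVar_slab_le u a N j c).trans ?_
  simp

theorem card_slab_mul_le (a : Fin d → ℤ) (N : ℕ) (i : Fin d) (c : ℤ) :
    ({x ∈ box a N | x i = c} : Finset _).card * N ≤ N ^ d := by
  classical
  have h := Finset.card_le_card_of_injOn
    (s := {x ∈ box a N | x i = c} ×ˢ Finset.Ico (a i) (a i + N))
    (t := box a N) (fun p => Function.update p.1 i p.2) ?_ ?_
  · simpa [card_box] using h
  · rintro ⟨z, t⟩ hz
    simp only [Finset.coe_product, Set.mem_prod, Finset.mem_coe, Finset.mem_filter,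
      Finset.mem_Ico] at hz
    exact update_mem_box hz.1.1 hz.2.1 hz.2.2
  · rintro ⟨z, t⟩ hz ⟨w, s⟩ hw h
    simp only [Finset.coe_product, Set.mem_prod, Finset.mem_coe, Finset.mem_filter] at hz hw
    have hts : t = s := by simpa using congrFun h i
    have hzw : z = w := by
      ext l
      by_cases hi : l = i
      · subst hi; rw [hz.1.2, hw.1.2]
      · simpa [hi] using congrFun h l
    rw [hts, hzw]

theorem piecewise_mem_box {a : Fin d → ℤ} {N : ℕ} (S : Finset (Fin d)) {x y : Fin d → ℤ}
    (hx : x ∈ box a N) (hy : y ∈ box a N) : S.piecewise y x ∈ box a N := by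
  rw [mem_box] at *
  intro i
  by_cases h : i ∈ S
  · simpa [h] using hy i
  · simpa [h] using hx i

theorem lineVar_nonneg (u : (Fin d → ℤ) → ℝ) (a : Fin d → ℤ) (N : ℕ) (j : Fin d)
    (z : Fin d → ℤ) : 0 ≤ lineVar u a N j z :=
  Finset.sum_nonneg fun _ _ => abs_nonneg _

/-- Trace form of the Poincaré inequality on a box: oscillation between a slab and the box. -/
theorem sum_slab_abs_sub_le (u : (Fin d → ℤ) → ℝ) (a : Fin d → ℤ) (N : ℕ) (i : Fin d) (c : ℤ) :
    ∑ x ∈ box a N with x i = c, ∑ y ∈ box a N, |u x - u y| ≤ N ^ d * bvar u (box a N) := by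
  set B := box a N with hB
  set V : Fin d → ℝ := fun j => ∑ x ∈ faces B j, |u (nbr j x) - u x| with hV
  have key : ∀ S : Finset (Fin d), i ∉ S →
      ∑ x ∈ B with x i = c, ∑ y ∈ B, |u x - u ((insert i S).piecewise y x)| ≤
        N ^ d * ∑ j ∈ insert i S, V j := by
    intro S
    induction S using Finset.induction_on with
    | empty =>
      intro _
      simp only [piecewise_insert_eq, Finset.piecewise_empty, insert_empty_eq,
        Finset.sum_singleton]
      calc ∑ x ∈ B with x i = c, ∑ y ∈ B, |u x - u (Function.update x i (y i))|
          ≤ ∑ x ∈ B with x i = c, ∑ y ∈ B, lineVar u a N i x := by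
            refine Finset.sum_le_sum fun x hx => Finset.sum_le_sum fun y hy => ?_
            have := mem_box.1 hy i
            exact abs_sub_update_le_lineVar u a N i (Finset.mem_filter.1 hx).1 this.1 this.2
        _ = N ^ d * ∑ x ∈ B with x i = c, lineVar u a N i x := by
            simp [hB, card_box, Finset.mul_sum]
        _ ≤ N ^ d * V i := by
            gcongr
            exact sum_lineVar_slab_le u a N i c
    | insert j S hj ih =>
      intro hi
      have hij : i ≠ j := by rintro rfl; simp at hi
      have hiS : i ∉ S := fun h => hi (Finset.mem_insert_of_mem h)
      have hjT : j ∉ insert i S := by simp [hj, hij.symm]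
      rw [Finset.insert_comm, Finset.sum_insert hjT, mul_add]
      set T := insert i S with hT
      have hiT : i ∈ T := by simp [hT]
      have h2 : ∑ x ∈ B with x i = c, ∑ y ∈ B,
          |u (T.piecewise y x) - u ((insert j T).piecewise y x)| ≤ N ^ d * V j := by
        calc _ ≤ ∑ x ∈ B with x i = c, ∑ y ∈ B, lineVar u a N j (T.piecewise y x) := by
              refine Finset.sum_le_sum fun x hx => Finset.sum_le_sum fun y hy => ?_
              have := mem_box.1 hy j
              rw [piecewise_insert_eq T]
              exact abs_sub_update_le_lineVar u a N j
                (piecewise_mem_box T (Finset.mem_filter.1 hx).1 hy) this.1 this.2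
          _ = ∑ p ∈ {x ∈ B | x i = c} ×ˢ B, lineVar u a N j (T.piecewise p.2 p.1) := by
              rw [Finset.sum_product]
          _ = ∑ p ∈ ({x ∈ B | x i = c} ×ˢ B).image
                (fun p => (T.piecewise p.2 p.1, T.piecewise p.1 p.2)), lineVar u a N j p.1 := by
              rw [Finset.sum_image]
              rintro ⟨x, y⟩ - ⟨x', y'⟩ - h
              simp only [Prod.mk.injEq] at h
              have h1 : x = x' := by
                ext l
                by_cases hl : l ∈ T
                · simpa [hl] using congrFun h.2 l
                · simpa [hl] using congrFun h.1 l
              have h2 : y = y' := by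
                ext l
                by_cases hl : l ∈ T
                · simpa [hl] using congrFun h.1 l
                · simpa [hl] using congrFun h.2 l
              rw [h1, h2]
          _ ≤ ∑ p ∈ B ×ˢ {x ∈ B | x i = c}, lineVar u a N j p.1 := by
              refine Finset.sum_le_sum_of_subset_of_nonneg ?_
                (fun _ _ _ => lineVar_nonneg _ _ _ _ _)
              intro p hp
              simp only [Finset.mem_image, Finset.mem_product, Finset.mem_filter] at hp
              obtain ⟨⟨x, y⟩, ⟨⟨hx, hc⟩, hy⟩, rfl⟩ := hp
              simp only [Finset.mem_product, Finset.mem_filter]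
              exact ⟨piecewise_mem_box T hx hy, piecewise_mem_box T hy hx, by simpa [hiT] using hc⟩
          _ = ({x ∈ B | x i = c} : Finset _).card * ∑ z ∈ B, lineVar u a N j z := by
              rw [Finset.sum_product]
              simp [Finset.mul_sum]
          _ ≤ ({x ∈ B | x i = c} : Finset _).card * (N * V j) := by
              gcongr
              exact sum_lineVar_le u a N j
          _ = (({x ∈ B | x i = c} : Finset _).card * N : ℕ) * V j := by push_cast; ring
          _ ≤ (N ^ d : ℕ) * V j := by
              have : 0 ≤ V j := Finset.sum_nonneg fun _ _ => abs_nonneg _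
              gcongr
              exact card_slab_mul_le a N i c
          _ = _ := by push_cast; ring
      have h1 := ih hiS
      have : ∑ x ∈ B with x i = c, ∑ y ∈ B, |u x - u ((insert j T).piecewise y x)| ≤
          ∑ x ∈ B with x i = c, ∑ y ∈ B, |u x - u (T.piecewise y x)| +
          ∑ x ∈ B with x i = c, ∑ y ∈ B,
            |u (T.piecewise y x) - u ((insert j T).piecewise y x)| := by
        simp only [← Finset.sum_add_distrib]
        exact Finset.sum_le_sum fun x hx => Finset.sum_le_sum fun y hy => abs_sub_le _ _ _
      linarith
  have := key (Finset.univ.erase i) (by simp)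
  rw [Finset.insert_erase (Finset.mem_univ i)] at this
  simpa [Finset.insert_erase, bvar, hV] using this

/-- The Poincaré inequality on a box. -/
theorem sum_sum_abs_sub_le (u : (Fin d → ℤ) → ℝ) (a : Fin d → ℤ) (N : ℕ) (hd : 1 ≤ d) :
    ∑ x ∈ box a N, ∑ y ∈ box a N, |u x - u y| ≤ N ^ (d + 1) * bvar u (box a N) := by
  classical
  let i : Fin d := ⟨0, hd⟩
  rw [← Finset.sum_fiberwise_of_maps_to (s := box a N) (t := Finset.Ico (a i) (a i + N))
    (g := fun z => z i) (fun z hz => by simpa using mem_box.1 hz i)]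
  refine (Finset.sum_le_card_nsmul _ _ _ fun c _ => sum_slab_abs_sub_le u a N i c).trans ?_
  simp only [Int.card_Ico, add_sub_cancel_left, Int.toNat_natCast, nsmul_eq_mul]
  exact le_of_eq (by ring)

theorem abs_sub_le_bvar (u : (Fin d → ℤ) → ℝ) (a : Fin d → ℤ) (N : ℕ) {x y : Fin d → ℤ}
    (hx : x ∈ box a N) (hy : y ∈ box a N) : |u x - u y| ≤ bvar u (box a N) := by
  set V : Fin d → ℝ := fun j => ∑ x ∈ faces (box a N) j, |u (nbr j x) - u x| with hV
  have key : ∀ S : Finset (Fin d), |u x - u (S.piecewise y x)| ≤ ∑ j ∈ S, V j := by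
    intro S
    induction S using Finset.induction_on with
    | empty => simp
    | insert j S hj ih =>
      rw [Finset.sum_insert hj, piecewise_insert_eq]
      set z := S.piecewise y x
      have hz : z ∈ box a N := piecewise_mem_box S hx hy
      have hyj := mem_box.1 hy j
      have h1 := abs_sub_update_le_lineVar u a N j hz hyj.1 hyj.2
      have h2 : lineVar u a N j z ≤ V j := by
        refine le_trans ?_ (sum_lineVar_slab_le u a N j (z j))
        exact Finset.single_le_sum (f := fun z => lineVar u a N j z)
          (fun _ _ => lineVar_nonneg _ _ _ _ _) (by simp [hz])
      have := abs_sub_le (u x) (u z) (u (Function.update z j (y j)))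
      linarith
  simpa [bvar, hV] using key Finset.univ

/-- The `k`-th dyadic ancestor of a cell. -/
def anc (k : ℕ) (x : Fin d → ℤ) : Fin d → ℤ := fun i => x i / 2 ^ k

/-- The cells contained in the dyadic cube of generation `k` and index `m`. -/
def cube (k : ℕ) (m : Fin d → ℤ) : Finset (Fin d → ℤ) := box (fun i => 2 ^ k * m i) (2 ^ k)

/-- The average of `f` over a discrete dyadic cube. -/
def avg (f : (Fin d → ℤ) → ℝ) (k : ℕ) (m : Fin d → ℤ) : ℝ :=
  (∑ x ∈ cube k m, f x) / (2 ^ k) ^ d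

theorem mem_cube {k : ℕ} {m x : Fin d → ℤ} : x ∈ cube k m ↔ anc k x = m := by
  rw [cube, mem_box, funext_iff]
  refine forall_congr' fun i => ?_
  have h : (0 : ℤ) < 2 ^ k := by positivity
  rw [anc, Int.ediv_eq_iff_of_pos h]
  push_cast
  constructor <;> rintro ⟨h1, h2⟩ <;> constructor <;> nlinarith

theorem card_cube (k : ℕ) (m : Fin d → ℤ) : (cube k m).card = (2 ^ k) ^ d := card_box _ _

@[simp] theorem anc_zero (x : Fin d → ℤ) : anc 0 x = x := by ext; simp [anc]

theorem anc_anc (k j : ℕ) (x : Fin d → ℤ) : anc j (anc k x) = anc (k + j) x := by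
  ext i
  simp only [anc, pow_add]
  exact Int.ediv_ediv_of_nonneg (by positivity)

@[simp] theorem cube_zero (m : Fin d → ℤ) : cube 0 m = {m} := by
  ext x; rw [mem_cube]; simp

@[simp] theorem avg_zero (f : (Fin d → ℤ) → ℝ) (m : Fin d → ℤ) : avg f 0 m = f m := by
  simp [avg]

theorem sum_cube_add {M : Type*} [AddCommMonoid M] (h : (Fin d → ℤ) → M) (k j : ℕ)
    (m : Fin d → ℤ) :
    ∑ x ∈ cube (k + j) m, h x = ∑ p ∈ cube j m, ∑ x ∈ cube k p, h x := by
  rw [← Finset.sum_fiberwise_of_maps_to (s := cube (k + j) m) (t := cube j m) (g := anc k)]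
  · refine Finset.sum_congr rfl fun p hp => Finset.sum_congr ?_ fun _ _ => rfl
    ext x
    rw [Finset.mem_filter, mem_cube, mem_cube]
    rw [mem_cube] at hp
    constructor
    · exact fun h => h.2
    · rintro rfl; exact ⟨by rw [← anc_anc, hp], rfl⟩
  · intro x hx
    rw [mem_cube] at *
    rw [anc_anc, hx]

theorem cube_subset_cube {k j : ℕ} {m p : Fin d → ℤ} (h : anc j p = m) :
    cube k p ⊆ cube (k + j) m := by
  intro x hx
  rw [mem_cube] at *
  rw [← anc_anc, hx, h]

/-- The indicator of the superlevel set of `f` at `t`. -/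
def ind (f : (Fin d → ℤ) → ℝ) (t : ℝ) (x : Fin d → ℤ) : ℝ := if t < f x then 1 else 0

/-- The number of cells of `B` at which `f` exceeds `t`. -/
def supCard (f : (Fin d → ℤ) → ℝ) (t : ℝ) (B : Finset (Fin d → ℤ)) : ℕ :=
  ({x ∈ B | t < f x} : Finset _).card

theorem supCard_mono (f : (Fin d → ℤ) → ℝ) {s t : ℝ} (hst : s ≤ t) {B B' : Finset (Fin d → ℤ)}
    (h : B ⊆ B') : supCard f t B ≤ supCard f s B' := by
  refine Finset.card_le_card fun x hx => ?_
  rw [Finset.mem_filter] at *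
  exact ⟨h hx.1, hst.trans_lt hx.2⟩

theorem card_mul_supCard_le (f : (Fin d → ℤ) → ℝ) (t : ℝ) (S B : Finset (Fin d → ℤ)) :
    (({x ∈ S | ¬ t < f x} : Finset _).card * supCard f t B : ℝ) ≤
      ∑ x ∈ S, ∑ y ∈ B, |ind f t x - ind f t y| := by
  calc (({x ∈ S | ¬ t < f x} : Finset _).card * supCard f t B : ℝ)
      = ∑ x ∈ S with ¬ t < f x, ∑ y ∈ B with t < f y, |ind f t x - ind f t y| := by
        rw [supCard, ← nsmul_eq_mul, ← Finset.sum_const]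
        refine Finset.sum_congr rfl fun x hx => ?_
        rw [Finset.card_eq_sum_ones, Nat.cast_sum]
        refine Finset.sum_congr rfl fun y hy => ?_
        rw [Finset.mem_filter] at hx hy
        simp [ind, hx.2, hy.2]
    _ ≤ ∑ x ∈ S with ¬ t < f x, ∑ y ∈ B, |ind f t x - ind f t y| := by
        gcongr with x hx
        exact Finset.filter_subset _ _
    _ ≤ _ := by
        refine Finset.sum_le_sum_of_subset_of_nonneg (Finset.filter_subset _ _) ?_
        intros; positivity

theorem measurable_ind (f : (Fin d → ℤ) → ℝ) (x : Fin d → ℤ) : Measurable fun t => ind f t x := by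
  unfold ind
  exact Measurable.ite measurableSet_Iio measurable_const measurable_const

theorem measurable_bvar_ind (f : (Fin d → ℤ) → ℝ) (B : Finset (Fin d → ℤ)) :
    Measurable fun t => bvar (ind f t) B := by
  unfold bvar
  refine Finset.measurable_sum _ fun j _ => Finset.measurable_sum _ fun x _ => ?_
  exact ((measurable_ind f _).sub (measurable_ind f _)).abs

theorem lintegral_ind (f : (Fin d → ℤ) → ℝ) (x y : Fin d → ℤ) :
    ∫⁻ t, ENNReal.ofReal |ind f t x - ind f t y| = ENNReal.ofReal |f x - f y| := by
  have h : ∀ a b : ℝ, a ≤ b → ∫⁻ t, ENNReal.ofReal |(if t < a then (1:ℝ) else 0) -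
      (if t < b then 1 else 0)| = ENNReal.ofReal |a - b| := by
    intro a b hab
    have : (fun t => ENNReal.ofReal |(if t < a then (1:ℝ) else 0) - (if t < b then 1 else 0)|) =
        (Ico a b).indicator 1 := by
      ext t
      by_cases h1 : t < a
      · have h2 : t < b := h1.trans_le hab
        simp [h1, h2]
      · by_cases h2 : t < b <;> simp [h1, h2, not_lt.1 h1]
    rw [this, lintegral_indicator_one measurableSet_Ico, Real.volume_Ico, abs_sub_comm,
      abs_of_nonneg (sub_nonneg.2 hab)]
  rcases le_total (f x) (f y) with hxy | hxy
  · exact h _ _ hxy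
  · simp only [abs_sub_comm (ind f _ x), abs_sub_comm (f x)]
    exact h _ _ hxy

theorem supCard_mul_card_le (f : (Fin d → ℤ) → ℝ) (t : ℝ) (k : ℕ) (m : Fin d → ℤ) (hd : 1 ≤ d) :
    ((((2 ^ k) ^ d - supCard f t (cube k m)) * supCard f t (cube k m) : ℝ)) ≤
      (2 ^ k) ^ (d + 1) * bvar (ind f t) (cube k m) := by
  have h1 := card_mul_supCard_le f t (cube k m) (cube k m)
  have h2 := sum_sum_abs_sub_le (ind f t) (fun i => 2 ^ k * m i) (2 ^ k) hd
  have h3 := Finset.card_filter_add_card_filter_not (s := cube k m) (fun x => t < f x)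
  rw [card_cube] at h3
  have h4 : ((({x ∈ cube k m | ¬ t < f x} : Finset _).card : ℕ) : ℝ) =
      (2 ^ k) ^ d - supCard f t (cube k m) := by
    rw [eq_sub_iff_add_eq, supCard]; exact_mod_cast (by rw [add_comm]; exact h3)
  rw [← h4]
  exact h1.trans (by exact_mod_cast h2)

/-- If the superlevel set at `s'` has density at least `2^{-(d+1)}` and the one at `s` has density
at most `1/2`, then the variation controls `s' - s`. -/
theorem charge_cube (f : (Fin d → ℤ) → ℝ) (hd : 1 ≤ d) (k : ℕ) (m : Fin d → ℤ) {s s' t : ℝ}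
    (hs't : s' ≤ t)
    (hlow : 2 * supCard f s (cube k m) ≤ (2 ^ k) ^ d)
    (hhigh : (2 ^ k) ^ d ≤ 2 ^ (d + 1) * supCard f s' (cube k m)) :
    ENNReal.ofReal (s' - s) * (2 ^ k) ^ d ≤ 2 ^ (d + 2) * (2 ^ k *
      ∫⁻ l in Ico s t, ENNReal.ofReal (bvar (ind f l) (cube k m))) := by
  have key : ∀ l ∈ Ico s s', ((2 ^ k) ^ d : ℝ) ≤ 2 ^ (d + 2) * 2 ^ k *
      bvar (ind f l) (cube k m) := by
    intro l hl
    have h1 := supCard_mul_card_le f l k m hd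
    have h2 : 2 * supCard f l (cube k m) ≤ (2 ^ k) ^ d :=
      le_trans (by have := supCard_mono f hl.1 (Finset.Subset.refl (cube k m)); omega) hlow
    have h3 : (2 ^ k) ^ d ≤ 2 ^ (d + 1) * supCard f l (cube k m) :=
      hhigh.trans (by gcongr; exact supCard_mono f hl.2.le (Finset.Subset.refl (cube k m)))
    have h2' : (2 * supCard f l (cube k m) : ℝ) ≤ (2 ^ k) ^ d := by exact_mod_cast h2
    have h3' : ((2 ^ k) ^ d : ℝ) ≤ 2 ^ (d + 1) * supCard f l (cube k m) := by exact_mod_cast h3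
    set N : ℝ := (2 ^ k) ^ d with hN
    set c : ℝ := ((supCard f l (cube k m) : ℕ) : ℝ)
    have hNpos : 0 < N := by positivity
    have h4 : N / 2 * c ≤ N * 2 ^ k * bvar (ind f l) (cube k m) := by
      refine le_trans ?_ (h1.trans (le_of_eq (by rw [pow_succ, ← hN])))
      have : 0 ≤ c := Nat.cast_nonneg _
      gcongr
      linarith
    have h5 : c ≤ 2 * (2 ^ k * bvar (ind f l) (cube k m)) := by
      have : N * c ≤ N * (2 * (2 ^ k * bvar (ind f l) (cube k m))) := by linarith
      exact le_of_mul_le_mul_left this hNpos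
    calc N ≤ 2 ^ (d + 1) * c := h3'
      _ ≤ 2 ^ (d + 1) * (2 * (2 ^ k * bvar (ind f l) (cube k m))) := by gcongr
      _ = _ := by ring
  calc ENNReal.ofReal (s' - s) * (2 ^ k) ^ d
      = ∫⁻ l in Ico s s', (2 ^ k) ^ d := by
        rw [setLIntegral_const, Real.volume_Ico, mul_comm]
    _ ≤ ∫⁻ l in Ico s s', 2 ^ (d + 2) * 2 ^ k * ENNReal.ofReal (bvar (ind f l) (cube k m)) := by
        refine setLIntegral_mono' measurableSet_Ico fun l hl => ?_
        have := ENNReal.ofReal_le_ofReal (key l hl)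
        rw [ENNReal.ofReal_mul (by positivity)] at this
        simpa [ENNReal.ofReal_pow, ENNReal.ofReal_mul] using this
    _ = 2 ^ (d + 2) * 2 ^ k * ∫⁻ l in Ico s s', ENNReal.ofReal (bvar (ind f l) (cube k m)) := by
        rw [lintegral_const_mul]
        exact (measurable_bvar_ind f _).ennreal_ofReal
    _ ≤ 2 ^ (d + 2) * 2 ^ k * ∫⁻ l in Ico s t, ENNReal.ofReal (bvar (ind f l) (cube k m)) := by
        gcongr
    _ = _ := by rw [mul_assoc]

theorem avg_mul (f : (Fin d → ℤ) → ℝ) (k : ℕ) (m : Fin d → ℤ) :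
    avg f k m * (2 ^ k) ^ d = ∑ x ∈ cube k m, f x :=
  div_mul_cancel₀ _ (by positivity)

theorem avg_succ_sub_mul_le (f : (Fin d → ℤ) → ℝ) (k : ℕ) (m : Fin d → ℤ) (s : ℝ) :
    ENNReal.ofReal (avg f (k + 1) m - s) * (2 ^ (k + 1)) ^ d ≤
      ∑ p ∈ cube 1 m, ENNReal.ofReal (avg f k p - s) * (2 ^ k) ^ d := by
  have hc : ∀ (t : ℝ) (j : ℕ), ENNReal.ofReal t * (2 ^ j) ^ d =
      ENNReal.ofReal (t * (2 ^ j) ^ d) := by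
    intro t j; rw [ENNReal.ofReal_mul' (by positivity)]; simp [ENNReal.ofReal_pow]
  simp only [hc]
  have h : (avg f (k + 1) m - s) * (2 ^ (k + 1)) ^ d =
      ∑ p ∈ cube 1 m, (avg f k p - s) * (2 ^ k) ^ d := by
    simp only [sub_mul, avg_mul, Finset.sum_sub_distrib, sum_cube_add, Finset.sum_const, card_cube,
      nsmul_eq_mul]
    push_cast
    ring
  rw [h]
  exact Finset.le_sum_of_subadditive _ ENNReal.ofReal_zero.le
    (fun _ _ => ENNReal.ofReal_add_le) _ _

/-- The weighted charge of a cube `(r, p)` seen from generation `k` at level `s`. -/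
def charge (f : (Fin d → ℤ) → ℝ) (k : ℕ) (s : ℝ) (c : ℕ × (Fin d → ℤ)) : ℝ≥0∞ :=
  (3 / 2) ^ (k - c.1) * (2 ^ c.1 *
    ∫⁻ l in Ico s (avg f c.1 c.2), ENNReal.ofReal (bvar (ind f l) (cube c.1 c.2)))

/-- A family of pairwise disjoint dyadic subcubes of the cube `(k, m)`. -/
structure IsSubfamily (k : ℕ) (m : Fin d → ℤ) (R : Finset (ℕ × (Fin d → ℤ))) : Prop where
  sub : ∀ c ∈ R, c.1 ≤ k ∧ anc (k - c.1) c.2 = m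
  disj : ∀ x, ∀ c ∈ R, ∀ c' ∈ R, anc c.1 x = c.2 → anc c'.1 x = c'.2 → c = c'

theorem isSubfamily_biUnion (k : ℕ) (m : Fin d → ℤ)
    (R : (Fin d → ℤ) → Finset (ℕ × (Fin d → ℤ))) (hR : ∀ p ∈ cube 1 m, IsSubfamily k p (R p)) :
    IsSubfamily (k + 1) m ((cube 1 m).biUnion R) := by
  constructor
  · intro c hc
    obtain ⟨p, hp, hcp⟩ := Finset.mem_biUnion.1 hc
    obtain ⟨h1, h2⟩ := (hR p hp).sub c hcp
    refine ⟨by omega, ?_⟩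
    rw [show k + 1 - c.1 = (k - c.1) + 1 by omega, ← anc_anc, h2]
    exact mem_cube.1 hp
  · intro x c hc c' hc' hx hx'
    obtain ⟨p, hp, hcp⟩ := Finset.mem_biUnion.1 hc
    obtain ⟨p', hp', hcp'⟩ := Finset.mem_biUnion.1 hc'
    obtain ⟨h1, h2⟩ := (hR p hp).sub c hcp
    obtain ⟨h1', h2'⟩ := (hR p' hp').sub c' hcp'
    have e : p = p' := by
      rw [← h2, ← h2', ← hx, ← hx', anc_anc, anc_anc]
      congr 1; omega
    subst e
    exact (hR p hp).disj x c hcp c' hcp' hx hx'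

theorem sum_biUnion_subfamily {M : Type*} [AddCommMonoid M] (k : ℕ) (m : Fin d → ℤ)
    (R : (Fin d → ℤ) → Finset (ℕ × (Fin d → ℤ))) (hR : ∀ p ∈ cube 1 m, IsSubfamily k p (R p))
    (g : ℕ × (Fin d → ℤ) → M) :
    ∑ c ∈ (cube 1 m).biUnion R, g c = ∑ p ∈ cube 1 m, ∑ c ∈ R p, g c := by
  refine Finset.sum_biUnion fun p hp p' hp' hne => Finset.disjoint_left.2 fun c hc hc' => hne ?_
  rw [← ((hR p hp).sub c hc).2, ← ((hR p' hp').sub c hc').2]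

theorem charge_mono (f : (Fin d → ℤ) → ℝ) (k : ℕ) {s s' : ℝ} (h : s ≤ s')
    (c : ℕ × (Fin d → ℤ)) : charge f k s' c ≤ charge f k s c := by
  unfold charge
  gcongr

/-- A cube whose superlevel set at `s` has small density and whose average exceeds `s` contains
disjoint subcubes whose boundaries of superlevel sets control the excess of the average. -/
theorem exists_charged_subfamily (f : (Fin d → ℤ) → ℝ) (hd : 1 ≤ d) (k : ℕ) :
    ∀ (m : Fin d → ℤ) (s : ℝ), 2 ^ (d + 1) * supCard f s (cube k m) < (2 ^ k) ^ d →
    ∃ R : Finset (ℕ × (Fin d → ℤ)), IsSubfamily k m R ∧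
      ENNReal.ofReal (avg f k m - s) * (2 ^ k) ^ d ≤
        3 * 2 ^ (d + 2) * ∑ c ∈ R, charge f k s c := by
  induction k with
  | zero =>
    intro m s hs
    refine ⟨∅, ⟨by simp, by simp⟩, ?_⟩
    have h0 : supCard f s {m} = 0 := by
      by_contra h
      have : 1 ≤ 2 ^ (d + 1) * supCard f s {m} := Nat.mul_pos (by positivity) (by omega)
      simp at hs; omega
    have h1 : f m ≤ s := by
      by_contra h
      simp [supCard, Finset.filter_singleton, not_le.1 h] at h0
    simp [h1]
  | succ k ih =>
    intro m s hs
    have child : ∀ p ∈ cube 1 m, ∃ R : Finset (ℕ × (Fin d → ℤ)), IsSubfamily k p R ∧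
        ENNReal.ofReal (avg f k p - s) * (2 ^ k) ^ d ≤
          3 * 2 ^ (d + 2) * ∑ c ∈ R, charge f (k + 1) s c := by
      intro p hp
      rcases le_or_gt (avg f k p) s with hps | hps
      · refine ⟨∅, ⟨by simp, by simp⟩, ?_⟩
        simp [hps]
      set s' := s + (avg f k p - s) / 3 with hs'
      have hss' : s ≤ s' := by rw [hs']; linarith
      by_cases hlow : 2 ^ (d + 1) * supCard f s' (cube k p) < (2 ^ k) ^ d
      · obtain ⟨R, hR, hsum⟩ := ih p s' hlow
        refine ⟨R, hR, ?_⟩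
        have e : avg f k p - s = 3 / 2 * (avg f k p - s') := by rw [hs']; ring
        have e32 : ENNReal.ofReal (3 / 2) = 3 / 2 := by
          rw [ENNReal.ofReal_div_of_pos (by norm_num)]; simp
        rw [e, ENNReal.ofReal_mul (by norm_num), mul_assoc, e32]
        calc (3 / 2 : ℝ≥0∞) * (ENNReal.ofReal (avg f k p - s') * (2 ^ k) ^ d)
            ≤ 3 / 2 * (3 * 2 ^ (d + 2) * ∑ c ∈ R, charge f k s' c) := by gcongr
          _ = 3 * 2 ^ (d + 2) * ∑ c ∈ R, 3 / 2 * charge f k s' c := by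
            rw [← Finset.mul_sum]; ring
          _ ≤ _ := by
            refine mul_le_mul_right (Finset.sum_le_sum fun c hc => ?_) _
            refine le_trans (mul_le_mul_right (charge_mono f k hss' c) _) (le_of_eq ?_)
            unfold charge
            rw [show k + 1 - c.1 = (k - c.1) + 1 by have := (hR.sub c hc).1; omega, pow_succ]
            ring
      · refine ⟨{(k, p)}, ⟨by simp, by simp +contextual⟩, ?_⟩
        have h1 : 2 * supCard f s (cube k p) ≤ (2 ^ k) ^ d := by
          have h2 : supCard f s (cube k p) ≤ supCard f s (cube (k + 1) m) :=
            supCard_mono f le_rfl (cube_subset_cube (mem_cube.1 hp))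
          have h3 : 2 ^ d * (2 * supCard f s (cube (k + 1) m)) ≤ 2 ^ d * (2 ^ k) ^ d := by
            calc _ = 2 ^ (d + 1) * supCard f s (cube (k + 1) m) := by ring
              _ ≤ (2 ^ (k + 1)) ^ d := hs.le
              _ = _ := by rw [pow_succ, mul_pow]; ring
          have h4 := Nat.le_of_mul_le_mul_left h3 (by positivity)
          omega
        have h2 := charge_cube f hd k p (s := s) (s' := s') (t := avg f k p)
          (by rw [hs']; linarith) h1 (not_lt.1 hlow)
        have e : avg f k p - s = 3 * (s' - s) := by rw [hs']; ring
        rw [e, ENNReal.ofReal_mul (by norm_num), Finset.sum_singleton, mul_assoc, mul_assoc,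
          ENNReal.ofReal_ofNat]
        refine mul_le_mul_right (h2.trans (mul_le_mul_right ?_ _)) _
        unfold charge
        refine le_mul_of_one_le_left (by positivity) (one_le_pow₀ ?_)
        rw [ENNReal.le_div_iff_mul_le (by simp) (by simp)]
        norm_num
    choose! R hR hsum using child
    refine ⟨(cube 1 m).biUnion R, isSubfamily_biUnion k m R hR, ?_⟩
    rw [sum_biUnion_subfamily k m R hR, Finset.mul_sum]
    exact (avg_succ_sub_mul_le f k m s).trans (Finset.sum_le_sum fun p hp => hsum p hp)

/-- The translate of `x` by `z` in direction `j`. -/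
def step (z : ℤ) (j : Fin d) (x : Fin d → ℤ) : Fin d → ℤ := Function.update x j (x j + z)

/-- Translation by `z` in direction `j` as an equivalence. -/
def stepEquiv (z : ℤ) (j : Fin d) : (Fin d → ℤ) ≃ (Fin d → ℤ) where
  toFun := step z j
  invFun := step (-z) j
  left_inv x := by simp [step]
  right_inv x := by simp [step]

theorem tsum_cube (h : (Fin d → ℤ) → ℝ≥0∞) (k : ℕ) :
    ∑' m, ∑ x ∈ cube k m, h x = ∑' x, h x := by
  classical
  have : ∀ m, ∑ x ∈ cube k m, h x = ∑' x, if anc k x = m then h x else 0 := by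
    intro m
    rw [tsum_eq_sum (s := cube k m)]
    · refine Finset.sum_congr rfl fun x hx => ?_
      rw [if_pos (mem_cube.1 hx)]
    · intro x hx
      rw [if_neg (fun h => hx (mem_cube.2 h))]
  simp only [this]
  rw [ENNReal.tsum_comm]
  refine tsum_congr fun x => ?_
  rw [tsum_eq_single (anc k x)]
  · simp
  · intro m hm; rw [if_neg hm.symm]

open Classical in
/-- The contribution of the faces with lower cell `x` to the variation of `u` on the set of cells
where `A` holds. -/
def dens (A : (Fin d → ℤ) → Prop) (u : (Fin d → ℤ) → ℝ) (x : Fin d → ℤ) : ℝ≥0∞ :=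
  ∑ j, if A x ∧ A (nbr j x) then ENNReal.ofReal |u (nbr j x) - u x| else 0

/-- The variation of `u` on the set of cells where `A` holds. -/
def avar (A : (Fin d → ℤ) → Prop) (u : (Fin d → ℤ) → ℝ) : ℝ≥0∞ := ∑' x, dens A u x

theorem measurable_dens_ind (A : (Fin d → ℤ) → Prop) (f : (Fin d → ℤ) → ℝ) (x : Fin d → ℤ) :
    Measurable fun t => dens A (ind f t) x := by
  unfold dens
  refine Finset.measurable_sum _ fun j _ => ?_
  split_ifs
  · exact (((measurable_ind f _).sub (measurable_ind f _)).abs).ennreal_ofReal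
  · exact measurable_const

theorem measurable_avar_ind (A : (Fin d → ℤ) → Prop) (f : (Fin d → ℤ) → ℝ) :
    Measurable fun t => avar A (ind f t) :=
  Measurable.tsum fun x => measurable_dens_ind A f x

/-- The discrete coarea formula. -/
theorem lintegral_avar_ind (A : (Fin d → ℤ) → Prop) (f : (Fin d → ℤ) → ℝ) :
    ∫⁻ t, avar A (ind f t) = avar A f := by
  unfold avar
  rw [lintegral_tsum fun x => (measurable_dens_ind A f x).aemeasurable]
  refine tsum_congr fun x => ?_
  unfold dens
  rw [lintegral_finsetSum]
  · refine Finset.sum_congr rfl fun j _ => ?_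
    split_ifs
    · exact lintegral_ind f _ _
    · simp
  · intro j _
    split_ifs
    · exact (((measurable_ind f _).sub (measurable_ind f _)).abs).ennreal_ofReal
    · exact measurable_const

/-- The directions `1` and `-1` on each axis. -/
abbrev dirs (d : ℕ) : Finset (ℤ × Fin d) := {1, -1} ×ˢ Finset.univ

theorem card_dirs : (dirs d).card = 2 * d := by
  simp [dirs, Finset.card_product]

open Classical in
/-- The indicator of `a` lying inside and its neighbour lying outside the superlevel set. -/
def crossing (A : (Fin d → ℤ) → Prop) (u : (Fin d → ℤ) → ℝ) (t : ℝ) (a : Fin d → ℤ)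
    (e : ℤ × Fin d) : ℝ≥0∞ :=
  if A a ∧ A (step e.1 e.2 a) ∧ t < u a ∧ ¬ t < u (step e.1 e.2 a) then 1 else 0

theorem avar_ind_eq (A : (Fin d → ℤ) → Prop) (u : (Fin d → ℤ) → ℝ) (t : ℝ) :
    avar A (ind u t) = ∑' a, ∑ e ∈ dirs d, crossing A u t a e := by
  have h1 : ∀ x, dens A (ind u t) x =
      ∑ j, (crossing A u t x (1, j) + crossing A u t (step 1 j x) (-1, j)) := by
    intro x
    refine Finset.sum_congr rfl fun j _ => ?_
    have e1 : step (-1) j (step 1 j x) = x := by simp [step]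
    have e2 : nbr j x = step 1 j x := rfl
    by_cases hA : A x <;> by_cases hB : A (step 1 j x) <;> by_cases h : t < u x <;>
      by_cases h' : t < u (step 1 j x) <;> simp [crossing, e1, e2, hA, hB, h, h', ind]
  have h2 : ∀ a, ∑ e ∈ dirs d, crossing A u t a e =
      ∑ j, (crossing A u t a (1, j) + crossing A u t a (-1, j)) := by
    intro a
    rw [Finset.sum_product, Finset.sum_pair (by decide), Finset.sum_add_distrib]
  simp only [avar, h1, h2]
  rw [Summable.tsum_finsetSum fun _ _ => ENNReal.summable,
    Summable.tsum_finsetSum fun _ _ => ENNReal.summable]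
  refine Finset.sum_congr rfl fun j _ => ?_
  rw [ENNReal.tsum_add, ENNReal.tsum_add]
  congr 1
  exact (stepEquiv 1 j).tsum_eq fun a => crossing A u t a (-1, j)

theorem ofReal_bvar_le (A : (Fin d → ℤ) → Prop) (u : (Fin d → ℤ) → ℝ) (B : Finset (Fin d → ℤ))
    (hB : ∀ x ∈ B, A x) : ENNReal.ofReal (bvar u B) ≤ ∑ x ∈ B, dens A u x := by
  classical
  unfold bvar dens
  rw [ENNReal.ofReal_sum_of_nonneg (fun _ _ => Finset.sum_nonneg fun _ _ => abs_nonneg _),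
    Finset.sum_comm (s := B)]
  refine Finset.sum_le_sum fun j _ => ?_
  rw [ENNReal.ofReal_sum_of_nonneg (fun _ _ => abs_nonneg _), faces, Finset.sum_filter]
  refine Finset.sum_le_sum fun x hx => ?_
  split_ifs with h1 h2
  · exact le_rfl
  · exact absurd ⟨hB _ hx, hB _ h1⟩ h2
  · positivity
  · exact le_rfl

/-- The maximal admissible cubes on which the average of `f` exceeds `t`. -/
def Top (A : ℕ → (Fin d → ℤ) → Prop) (f : (Fin d → ℤ) → ℝ) (t : ℝ) (k : ℕ) (m : Fin d → ℤ) :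
    Prop :=
  A k m ∧ t < avg f k m ∧ ∀ j, 0 < j → A (k + j) (anc j m) → avg f (k + j) (anc j m) ≤ t

/-- A bounded, downward closed family of dyadic cubes. -/
structure IsAdmissible (A : ℕ → (Fin d → ℤ) → Prop) (K : ℕ) : Prop where
  down : ∀ k m, A (k + 1) (anc 1 m) → A k m
  le : ∀ k m, A k m → k ≤ K

/-- `g` is the maximal function of `f` with respect to the family `A`. -/
def IsMaxFun (A : ℕ → (Fin d → ℤ) → Prop) (f g : (Fin d → ℤ) → ℝ) : Prop :=
  ∀ x, A 0 x → ∀ t, t < g x ↔ ∃ k, A k (anc k x) ∧ t < avg f k (anc k x)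

section

variable {A : ℕ → (Fin d → ℤ) → Prop} {K : ℕ} {f g : (Fin d → ℤ) → ℝ}

theorem IsAdmissible.down_add (hA : IsAdmissible A K) (k j : ℕ) (m : Fin d → ℤ)
    (h : A (k + j) (anc j m)) : A k m := by
  induction j with
  | zero => simpa using h
  | succ j ih =>
    refine ih (hA.down _ _ ?_)
    rwa [anc_anc]

theorem IsAdmissible.cell (hA : IsAdmissible A K) {k : ℕ} {x : Fin d → ℤ} (h : A k (anc k x)) :
    A 0 x := hA.down_add 0 k x (by simpa using h)

theorem exists_top (hA : IsAdmissible A K) {t : ℝ} {x : Fin d → ℤ} {k : ℕ} (hk : A k (anc k x))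
    (ht : t < avg f k (anc k x)) : ∃ k, Top A f t k (anc k x) := by
  classical
  have hP : A k (anc k x) ∧ t < avg f k (anc k x) := ⟨hk, ht⟩
  have h1 := Nat.findGreatest_spec (P := fun k => A k (anc k x) ∧ t < avg f k (anc k x))
    (hA.le _ _ hk) hP
  set n := Nat.findGreatest (fun k => A k (anc k x) ∧ t < avg f k (anc k x)) K
  refine ⟨n, h1.1, h1.2, fun j hj hAj => ?_⟩
  rw [anc_anc] at *
  by_contra hlt
  exact Nat.findGreatest_is_greatest (P := fun k => A k (anc k x) ∧ t < avg f k (anc k x))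
    (n := K) (k := n + j) (by omega) (hA.le _ _ hAj) ⟨hAj, not_le.1 hlt⟩

theorem Top.avg_le {t : ℝ} {x : Fin d → ℤ} {k k' : ℕ} (h : Top A f t k (anc k x)) (hk : k < k')
    (h' : A k' (anc k' x)) : avg f k' (anc k' x) ≤ t := by
  have := h.2.2 (k' - k) (by omega)
  rw [anc_anc, show k + (k' - k) = k' by omega] at this
  exact this h'

theorem Top.eq {t : ℝ} {x : Fin d → ℤ} {k k' : ℕ} (h : Top A f t k (anc k x))
    (h' : Top A f t k' (anc k' x)) : k = k' := by
  rcases lt_trichotomy k k' with hk | hk | hk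
  · exact absurd h'.2.1 (not_lt.2 (h.avg_le hk h'.1))
  · exact hk
  · exact absurd h.2.1 (not_lt.2 (h'.avg_le hk h.1))

open Classical in
theorem sum_top_le (K : ℕ) (f : (Fin d → ℤ) → ℝ) (t : ℝ)
    (w : (Fin d → ℤ) → ℝ≥0∞) :
    ∑ k ∈ Finset.range (K + 1), ∑' m, (if Top A f t k m then ∑ a ∈ cube k m, w a else 0) ≤
      ∑' a, w a := by
  have h1 : ∀ k, ∑' m, (if Top A f t k m then ∑ a ∈ cube k m, w a else 0) =
      ∑' a, if Top A f t k (anc k a) then w a else 0 := by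
    intro k
    refine Eq.trans ?_ (tsum_cube (fun a => if Top A f t k (anc k a) then w a else 0) k)
    refine tsum_congr fun m => ?_
    split_ifs with h
    · refine Finset.sum_congr rfl fun a ha => ?_
      rw [mem_cube.1 ha, if_pos h]
    · refine (Finset.sum_eq_zero fun a ha => ?_).symm
      rw [mem_cube.1 ha, if_neg h]
  simp only [h1]
  rw [← Summable.tsum_finsetSum fun _ _ => ENNReal.summable]
  refine ENNReal.tsum_le_tsum fun a => ?_
  by_cases h : ∃ k, Top A f t k (anc k a)
  · obtain ⟨k0, hk0⟩ := h
    calc _ ≤ ∑ k ∈ Finset.range (K + 1), if k = k0 then w a else 0 := by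
          refine Finset.sum_le_sum fun k _ => ?_
          split_ifs with h1 h2
          · exact le_rfl
          · exact absurd (h1.eq hk0) h2
          · positivity
          · exact le_rfl
      _ ≤ w a := by
          rw [Finset.sum_ite_eq']
          split_ifs <;> simp
  · push Not at h
    simp [h]

/-- The cells of a dyadic cube whose neighbour in direction `e` leaves the cube lie in a slab. -/
theorem exists_slab (k : ℕ) (m : Fin d → ℤ) (e : ℤ × Fin d) (he : e ∈ dirs d) :
    ∃ c, ∀ a ∈ cube k m, anc k (step e.1 e.2 a) ≠ m → a e.2 = c := by
  have h2 : (1 : ℤ) ≤ 2 ^ k := one_le_pow₀ (by norm_num)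
  have key : ∀ c, ((∀ a ∈ cube k m, a e.2 ≠ c →
      2 ^ k * m e.2 ≤ a e.2 + e.1 ∧ a e.2 + e.1 < 2 ^ k * m e.2 + 2 ^ k) →
      ∀ a ∈ cube k m, anc k (step e.1 e.2 a) ≠ m → a e.2 = c) := by
    intro c hc a ha hne
    by_contra hac
    refine hne (mem_cube.1 ?_)
    have := hc a ha hac
    exact update_mem_box ha this.1 (by push_cast; exact this.2)
  have he1 : e.1 = 1 ∨ e.1 = -1 := by
    have := (Finset.mem_product.1 he).1
    simpa using this
  rcases he1 with h | h
  · refine ⟨2 ^ k * m e.2 + 2 ^ k - 1, key _ fun a ha hac => ?_⟩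
    have := mem_box.1 ha e.2
    push_cast at this
    rw [h]; omega
  · refine ⟨2 ^ k * m e.2, key _ fun a ha hac => ?_⟩
    have := mem_box.1 ha e.2
    push_cast at this
    rw [h]; omega

open Classical in
/-- The indicator of a boundary face of the cube `(k, m)` at `a` whose outer cell is admissible and
outside the superlevel set of `f`. -/
def outer (A : ℕ → (Fin d → ℤ) → Prop) (f : (Fin d → ℤ) → ℝ) (t : ℝ) (k : ℕ) (m a : Fin d → ℤ)
    (e : ℤ × Fin d) : ℝ≥0∞ :=
  if A 0 (step e.1 e.2 a) ∧ anc k (step e.1 e.2 a) ≠ m ∧ ¬ t < f (step e.1 e.2 a) then 1 else 0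

open Classical in
theorem sum_crossing_le (hA : IsAdmissible A K) (hg : IsMaxFun A f g) (t : ℝ) (a : Fin d → ℤ) :
    ∑ e ∈ dirs d, crossing (A 0) g t a e ≤ ∑ k ∈ Finset.range (K + 1),
      if Top A f t k (anc k a) then ∑ e ∈ dirs d, outer A f t k (anc k a) a e else 0 := by
  by_cases h : A 0 a ∧ t < g a
  · obtain ⟨k0, hk0, ht0⟩ := (hg a h.1 t).1 h.2
    obtain ⟨k, hk⟩ := exists_top hA hk0 ht0
    refine le_trans ?_ (Finset.single_le_sum (f := fun k => if Top A f t k (anc k a) then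
      ∑ e ∈ dirs d, outer A f t k (anc k a) a e else 0) (fun _ _ => by positivity)
      (Finset.mem_range.2 (Nat.lt_succ_of_le (hA.le _ _ hk.1))))
    rw [if_pos hk]
    refine Finset.sum_le_sum fun e _ => ?_
    unfold crossing outer
    split_ifs with h1 h2
    · exact le_rfl
    · refine absurd ⟨h1.2.1, fun hanc => h1.2.2.2 ?_, fun hf => h1.2.2.2 ?_⟩ h2
      · exact (hg _ h1.2.1 t).2 ⟨k, by rw [hanc]; exact hk.1, by rw [hanc]; exact hk.2.1⟩
      · exact (hg _ h1.2.1 t).2 ⟨0, by simpa using h1.2.1, by simpa using hf⟩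
    · positivity
    · exact le_rfl
  · have : ∀ e, crossing (A 0) g t a e = 0 := fun e => if_neg fun h' => h ⟨h'.1, h'.2.2.1⟩
    simp [this]

theorem sum_outer_le_of_high (hA : IsAdmissible A K) (t : ℝ) (k : ℕ) (m : Fin d → ℤ)
    (hm : A k m) (hhigh : (2 ^ k) ^ d ≤ 2 ^ (d + 1) * supCard f t (cube k m)) :
    ∑ a ∈ cube k m, ∑ e ∈ dirs d, outer A f t k m a e ≤
      ∑ a ∈ cube k m, (∑ e ∈ dirs d, crossing (A 0) f t a e +
        2 * d * 2 ^ (d + 1) * dens (A 0) (ind f t) a) := by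
  classical
  have hcell : ∀ a ∈ cube k m, A 0 a := fun a ha => hA.cell (k := k) (by rwa [mem_cube.1 ha])
  have h1 : ∀ e ∈ dirs d, ∑ a ∈ cube k m, outer A f t k m a e ≤
      ∑ a ∈ cube k m, crossing (A 0) f t a e +
        2 ^ (d + 1) * ENNReal.ofReal (bvar (ind f t) (cube k m)) := by
    intro e he
    obtain ⟨c, hc⟩ := exists_slab k m e he
    have h2 : ∀ a ∈ cube k m, outer A f t k m a e ≤ crossing (A 0) f t a e +
        if a e.2 = c ∧ ¬ t < f a then 1 else 0 := by
      intro a ha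
      unfold outer crossing
      split_ifs with h1 h2 h3 h3
      · simp
      · simp
      · simp
      · by_cases hfa : t < f a
        · exact absurd ⟨hcell a ha, h1.1, hfa, h1.2.2⟩ h2
        · exact absurd ⟨hc a ha h1.2.1, hfa⟩ h3
      all_goals positivity
    refine (Finset.sum_le_sum h2).trans ?_
    rw [Finset.sum_add_distrib]
    refine add_le_add le_rfl ?_
    set S : Finset (Fin d → ℤ) := {x ∈ cube k m | x e.2 = c} with hS
    have h3 := card_mul_supCard_le f t S (cube k m)
    have h4 := sum_slab_abs_sub_le (ind f t) (fun i => 2 ^ k * m i) (2 ^ k) e.2 c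
    set n : ℝ := ((({x ∈ S | ¬ t < f x} : Finset _).card : ℕ) : ℝ) with hn
    have h5 : n * supCard f t (cube k m) ≤ (2 ^ k) ^ d * bvar (ind f t) (cube k m) :=
      h3.trans (by exact_mod_cast h4)
    have h6 : ((2 ^ k) ^ d : ℝ) ≤ 2 ^ (d + 1) * supCard f t (cube k m) := by exact_mod_cast hhigh
    have h7 : n ≤ 2 ^ (d + 1) * bvar (ind f t) (cube k m) := by
      have h0 : 0 ≤ n := Nat.cast_nonneg _
      have hN : (0 : ℝ) < (2 ^ k) ^ d := by positivity
      refine le_of_mul_le_mul_left ?_ hN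
      calc (2 ^ k) ^ d * n ≤ 2 ^ (d + 1) * supCard f t (cube k m) * n := by gcongr
        _ = 2 ^ (d + 1) * (n * supCard f t (cube k m)) := by ring
        _ ≤ 2 ^ (d + 1) * ((2 ^ k) ^ d * bvar (ind f t) (cube k m)) := by gcongr
        _ = _ := by ring
    have h8 : ∑ a ∈ cube k m, (if a e.2 = c ∧ ¬ t < f a then (1 : ℝ≥0∞) else 0) =
        ENNReal.ofReal n := by
      rw [hn, ENNReal.ofReal_natCast, hS, Finset.filter_filter, Finset.sum_ite]
      simp
    rw [h8]
    refine (ENNReal.ofReal_le_ofReal h7).trans (le_of_eq ?_)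
    rw [ENNReal.ofReal_mul (by positivity)]
    simp [ENNReal.ofReal_pow]
  rw [Finset.sum_comm, Finset.sum_add_distrib, ← Finset.mul_sum]
  refine (Finset.sum_le_sum h1).trans ?_
  rw [Finset.sum_add_distrib, Finset.sum_const, card_dirs, Finset.sum_comm, nsmul_eq_mul]
  refine add_le_add le_rfl ?_
  rw [← mul_assoc]
  push_cast
  gcongr
  exact ofReal_bvar_le (A 0) _ _ hcell

theorem sum_outer_le (t : ℝ) (k : ℕ) (m : Fin d → ℤ) :
    ∑ a ∈ cube k m, ∑ e ∈ dirs d, outer A f t k m a e ≤ 2 * d * ((2 ^ k) ^ d / 2 ^ k) := by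
  classical
  rw [Finset.sum_comm]
  have h1 : ∀ e ∈ dirs d, ∑ a ∈ cube k m, outer A f t k m a e ≤ (2 ^ k) ^ d / 2 ^ k := by
    intro e he
    obtain ⟨c, hc⟩ := exists_slab k m e he
    calc _ ≤ ∑ a ∈ cube k m, if a e.2 = c then (1 : ℝ≥0∞) else 0 := by
          refine Finset.sum_le_sum fun a ha => ?_
          unfold outer
          split_ifs with h1 h2
          · exact le_rfl
          · exact absurd (hc a ha h1.2.1) h2
          · positivity
          · exact le_rfl
      _ = (({x ∈ cube k m | x e.2 = c} : Finset _).card : ℝ≥0∞) := by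
          rw [Finset.sum_ite]; simp
      _ ≤ _ := by
          rw [ENNReal.le_div_iff_mul_le (by simp) (by simp)]
          exact_mod_cast card_slab_mul_le (fun i => 2 ^ k * m i) (2 ^ k) e.2 c
  refine (Finset.sum_le_sum h1).trans ?_
  rw [Finset.sum_const, card_dirs, nsmul_eq_mul]
  push_cast
  exact le_rfl

open Classical in
theorem avar_ind_max_le (hA : IsAdmissible A K) (hg : IsMaxFun A f g) (t : ℝ) :
    avar (A 0) (ind g t) ≤ (1 + 2 * d * 2 ^ (d + 1)) * avar (A 0) (ind f t) +
      2 * d * ∑ k ∈ Finset.range (K + 1), ∑' m,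
        if Top A f t k m ∧ 2 ^ (d + 1) * supCard f t (cube k m) < (2 ^ k) ^ d
          then (2 ^ k) ^ d / 2 ^ k else 0 := by
  set w : (Fin d → ℤ) → ℝ≥0∞ := fun a => ∑ e ∈ dirs d, crossing (A 0) f t a e +
        2 * d * 2 ^ (d + 1) * dens (A 0) (ind f t) a with hw
  have hwsum : ∑' a, w a = (1 + 2 * d * 2 ^ (d + 1)) * avar (A 0) (ind f t) := by
    rw [hw, ENNReal.tsum_add, ← avar_ind_eq, ENNReal.tsum_mul_left, ← avar]
    ring
  have h0 : ∀ k m, (if Top A f t k m then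
      ∑ a ∈ cube k m, ∑ e ∈ dirs d, outer A f t k m a e else 0) ≤
      (if Top A f t k m then ∑ a ∈ cube k m, w a else 0) +
      2 * d * (if Top A f t k m ∧ 2 ^ (d + 1) * supCard f t (cube k m) < (2 ^ k) ^ d
          then (2 ^ k) ^ d / 2 ^ k else 0) := by
    intro k m
    by_cases hT : Top A f t k m
    · by_cases hl : 2 ^ (d + 1) * supCard f t (cube k m) < (2 ^ k) ^ d
      · simp only [hT, hl, and_self, if_true]
        exact le_add_left (sum_outer_le t k m)
      · simp only [hT, hl, and_false, if_true, if_false, mul_zero, add_zero]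
        exact sum_outer_le_of_high hA t k m hT.1 (not_lt.1 hl)
    · simp [hT]
  calc avar (A 0) (ind g t) = ∑' a, ∑ e ∈ dirs d, crossing (A 0) g t a e := avar_ind_eq _ _ _
    _ ≤ ∑' a, ∑ k ∈ Finset.range (K + 1),
        if Top A f t k (anc k a) then ∑ e ∈ dirs d, outer A f t k (anc k a) a e else 0 :=
      ENNReal.tsum_le_tsum fun a => sum_crossing_le hA hg t a
    _ = ∑ k ∈ Finset.range (K + 1), ∑' m, if Top A f t k m then
          ∑ a ∈ cube k m, ∑ e ∈ dirs d, outer A f t k m a e else 0 := by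
      rw [Summable.tsum_finsetSum fun _ _ => ENNReal.summable]
      refine Finset.sum_congr rfl fun k _ => ?_
      rw [← tsum_cube _ k]
      refine tsum_congr fun m => ?_
      split_ifs with h
      · refine Finset.sum_congr rfl fun a ha => ?_
        rw [mem_cube.1 ha, if_pos h]
      · refine Finset.sum_eq_zero fun a ha => ?_
        rw [mem_cube.1 ha, if_neg h]
    _ ≤ ∑ k ∈ Finset.range (K + 1), ∑' m,
        ((if Top A f t k m then ∑ a ∈ cube k m, w a else 0) +
        2 * d * (if Top A f t k m ∧ 2 ^ (d + 1) * supCard f t (cube k m) < (2 ^ k) ^ d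
          then (2 ^ k) ^ d / 2 ^ k else 0)) :=
      Finset.sum_le_sum fun k _ => ENNReal.tsum_le_tsum fun m => h0 k m
    _ ≤ _ := by
      simp only [ENNReal.tsum_add, Finset.sum_add_distrib, ENNReal.tsum_mul_left,
        ← Finset.mul_sum]
      rw [← hwsum]
      exact add_le_add (sum_top_le K f t w) le_rfl

end

section

variable {A : ℕ → (Fin d → ℤ) → Prop} {K : ℕ} {f g : (Fin d → ℤ) → ℝ}

/-- The levels at which the cube `(k, m)` is maximal but its superlevel set has small density. -/
def lowSet (A : ℕ → (Fin d → ℤ) → Prop) (f : (Fin d → ℤ) → ℝ) (k : ℕ) (m : Fin d → ℤ) : Set ℝ :=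
  {t | Top A f t k m ∧ 2 ^ (d + 1) * supCard f t (cube k m) < (2 ^ k) ^ d}

theorem bddBelow_lowSet (A : ℕ → (Fin d → ℤ) → Prop) (f : (Fin d → ℤ) → ℝ) (k : ℕ)
    (m : Fin d → ℤ) : BddBelow (lowSet A f k m) := by
  refine ⟨-∑ x ∈ cube k m, |f x|, fun t ht => ?_⟩
  by_contra hlt
  have h1 : supCard f t (cube k m) = (2 ^ k) ^ d := by
    rw [supCard, Finset.filter_true_of_mem, card_cube]
    intro x hx
    have h2 := Finset.single_le_sum (f := fun x => |f x|) (fun _ _ => abs_nonneg _) hx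
    have h3 := neg_abs_le (f x)
    linarith
  have h4 := ht.2
  rw [h1] at h4
  have : 1 ≤ 2 ^ (d + 1) := Nat.one_le_two_pow
  nlinarith [Nat.zero_le ((2 ^ k) ^ d)]

/-- Each low set is controlled by the charges of a disjoint family of subcubes. -/
theorem exists_lowSet_cover (hd : 1 ≤ d) (A : ℕ → (Fin d → ℤ) → Prop) (f : (Fin d → ℤ) → ℝ)
    (k : ℕ) (m : Fin d → ℤ) :
    ∃ (s : ℝ) (R : Finset (ℕ × (Fin d → ℤ))) (S : Set ℝ), MeasurableSet S ∧
      lowSet A f k m ⊆ S ∧ IsSubfamily k m R ∧ (R.Nonempty → s ∈ lowSet A f k m) ∧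
      volume S * (2 ^ k) ^ d ≤ 2 * (3 * 2 ^ (d + 2)) * ∑ c ∈ R, charge f k s c := by
  rcases (lowSet A f k m).eq_empty_or_nonempty with h | h
  · exact ⟨0, ∅, ∅, MeasurableSet.empty, h.le, ⟨by simp, by simp⟩, by simp, by simp⟩
  have hb := bddBelow_lowSet A f k m
  set σ := sInf (lowSet A f k m) with hσ
  obtain ⟨s0, hs0⟩ := h
  have hσ0 : σ < avg f k m := (csInf_le hb hs0).trans_lt hs0.1.2.1
  obtain ⟨s, hs, hslt⟩ := exists_lt_of_csInf_lt ⟨s0, hs0⟩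
    (show sInf (lowSet A f k m) < σ + (avg f k m - σ) / 2 by rw [← hσ]; linarith)
  obtain ⟨R, hR, hsum⟩ := exists_charged_subfamily f hd k m s hs.2
  refine ⟨s, R, Ico σ (avg f k m), measurableSet_Ico, fun t ht => ⟨csInf_le hb ht, ht.1.2.1⟩, hR,
    fun _ => hs, ?_⟩
  rw [Real.volume_Ico]
  calc ENNReal.ofReal (avg f k m - σ) * (2 ^ k) ^ d
      ≤ ENNReal.ofReal (2 * (avg f k m - s)) * (2 ^ k) ^ d := by
        gcongr; linarith
    _ = 2 * (ENNReal.ofReal (avg f k m - s) * (2 ^ k) ^ d) := by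
        rw [ENNReal.ofReal_mul (by norm_num), mul_assoc, ENNReal.ofReal_ofNat]
    _ ≤ 2 * (3 * 2 ^ (d + 2) * ∑ c ∈ R, charge f k s c) := by gcongr
    _ = _ := by ring

open Classical in
/-- Chains of charged cubes through a fixed cell have geometrically decaying weights. -/
theorem sum_chain_le (hA : IsAdmissible A K) (f : (Fin d → ℤ) → ℝ)
    (s : ℕ → (Fin d → ℤ) → ℝ) (R : ℕ → (Fin d → ℤ) → Finset (ℕ × (Fin d → ℤ)))
    (hR : ∀ k m, IsSubfamily k m (R k m))
    (hs : ∀ k m, (R k m).Nonempty → s k m ∈ lowSet A f k m) (x : Fin d → ℤ) (l : ℝ) :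
    ∑ k ∈ Finset.range (K + 1), ∑ c ∈ R k (anc k x),
      (if anc c.1 x = c.2 ∧ l ∈ Ico (s k (anc k x)) (avg f c.1 c.2)
        then (3 / 4 : ℝ≥0∞) ^ (k - c.1) else 0) ≤ 4 := by
  set P : ℕ → ℕ × (Fin d → ℤ) → Prop := fun k c =>
    c ∈ R k (anc k x) ∧ anc c.1 x = c.2 ∧ l ∈ Ico (s k (anc k x)) (avg f c.1 c.2) with hP
  by_cases hne : ∃ k, ∃ c, P k c
  swap
  · refine le_trans (le_of_eq (Finset.sum_eq_zero fun k _ => Finset.sum_eq_zero fun c hc => ?_))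
      zero_le
    exact if_neg fun h => hne ⟨k, c, hc, h⟩
  set k0 := Nat.find hne with hk0
  obtain ⟨c0, hc0, hc0x, hc0l⟩ := Nat.find_spec hne
  rw [← hk0] at hc0 hc0l
  have hT0 := (hs _ _ ⟨c0, hc0⟩).1
  have hle : ∀ k c, P k c → c.1 ≤ k0 ∧ k0 ≤ k := by
    rintro k c ⟨hc, hcx, hcl⟩
    refine ⟨?_, Nat.find_min' hne ⟨c, hc, hcx, hcl⟩⟩
    by_contra hlt
    have hAk := (hs _ _ ⟨c, hc⟩).1.1
    have hsub := (hR _ _).sub c hc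
    have hAc : A c.1 (anc c.1 x) := by
      refine hA.down_add c.1 (k - c.1) _ ?_
      rwa [hcx, hsub.2, show c.1 + (k - c.1) = k by omega]
    have h1 := hT0.avg_le (not_le.1 hlt) hAc
    rw [hcx] at h1
    exact absurd hcl.2 (not_lt.2 (h1.trans hc0l.1))
  have hterm : ∀ k, ∑ c ∈ R k (anc k x),
      (if anc c.1 x = c.2 ∧ l ∈ Ico (s k (anc k x)) (avg f c.1 c.2)
        then (3 / 4 : ℝ≥0∞) ^ (k - c.1) else 0) ≤
      if k0 ≤ k then (3 / 4 : ℝ≥0∞) ^ (k - k0) else 0 := by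
    intro k
    by_cases hk : ∃ c, P k c
    · obtain ⟨c, hc, hcx, hcl⟩ := hk
      rw [Finset.sum_eq_single c]
      · have := hle k c ⟨hc, hcx, hcl⟩
        rw [if_pos ⟨hcx, hcl⟩, if_pos this.2]
        refine pow_le_pow_right_of_le_one' ?_ (by omega)
        rw [ENNReal.div_le_iff (by simp) (by simp)]
        norm_num
      · intro c' hc' hne'
        exact if_neg fun h => hne' ((hR _ _).disj x c' hc' c hc h.1 hcx)
      · exact fun h => absurd hc h
    · refine le_trans (le_of_eq (Finset.sum_eq_zero fun c hc => ?_)) zero_le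
      exact if_neg fun h => hk ⟨c, hc, h⟩
  refine (Finset.sum_le_sum fun k _ => hterm k).trans ?_
  refine (ENNReal.sum_le_tsum _).trans ?_
  have h1 : ∑' k, (if k0 ≤ k then (3 / 4 : ℝ≥0∞) ^ (k - k0) else 0) =
      ∑' n, (3 / 4 : ℝ≥0∞) ^ n := by
    rw [← (add_left_injective k0).tsum_eq]
    · simp
    · intro k hk
      have : k0 ≤ k := by
        by_contra h
        exact hk (if_neg h)
      exact ⟨k - k0, Nat.sub_add_cancel this⟩
  rw [h1, ENNReal.tsum_geometric]
  have h2 : (1 : ℝ≥0∞) - 3 / 4 = 1 / 4 := by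
    refine ENNReal.sub_eq_of_eq_add (ENNReal.div_ne_top (by simp) (by simp)) ?_
    rw [ENNReal.div_add_div_same]
    norm_num
    exact (ENNReal.div_self (by simp) (by simp)).symm
  rw [h2]
  simp

theorem charge_div_le (hA : IsAdmissible A K) (f : (Fin d → ℤ) → ℝ) {k : ℕ} {m : Fin d → ℤ}
    (hm : A k m) (s : ℝ) {c : ℕ × (Fin d → ℤ)} (hc : c.1 ≤ k ∧ anc (k - c.1) c.2 = m) :
    charge f k s c / 2 ^ k ≤ ∫⁻ l, (Ico s (avg f c.1 c.2)).indicator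
      (fun l => (3 / 4) ^ (k - c.1) * ∑ x ∈ cube c.1 c.2, dens (A 0) (ind f l) x) l := by
  have hAc : A c.1 c.2 := by
    refine hA.down_add c.1 (k - c.1) _ ?_
    rwa [hc.2, show c.1 + (k - c.1) = k by omega]
  have e : (3 / 2 : ℝ≥0∞) ^ (k - c.1) * 2 ^ c.1 / 2 ^ k = (3 / 4) ^ (k - c.1) := by
    obtain ⟨j, rfl⟩ := Nat.exists_eq_add_of_le hc.1
    have h4 : (3 / 4 : ℝ≥0∞) = 3 / 2 / 2 := by
      rw [div_eq_mul_inv, div_eq_mul_inv, div_eq_mul_inv, mul_assoc,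
        ← ENNReal.mul_inv (by simp) (by simp)]
      norm_num
    rw [Nat.add_sub_cancel_left, h4, pow_add, mul_comm, mul_div_assoc,
      div_eq_mul_inv, ENNReal.mul_inv (by simp) (by simp), div_eq_mul_inv (3 / 2 : ℝ≥0∞) 2, mul_pow,
      ENNReal.inv_pow, ENNReal.inv_pow]
    calc (2 : ℝ≥0∞) ^ c.1 * ((3 / 2) ^ j * (2⁻¹ ^ c.1 * 2⁻¹ ^ j))
        = (2 ^ c.1 * 2⁻¹ ^ c.1) * ((3 / 2) ^ j * 2⁻¹ ^ j) := by ring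
      _ = _ := by
        rw [← mul_pow, ENNReal.mul_inv_cancel (by simp) (by simp)]; simp
  have hmeas : Measurable fun l => ENNReal.ofReal (bvar (ind f l) (cube c.1 c.2)) :=
    (measurable_bvar_ind f _).ennreal_ofReal
  rw [lintegral_indicator measurableSet_Ico]
  calc charge f k s c / 2 ^ k = (3 / 2 : ℝ≥0∞) ^ (k - c.1) * 2 ^ c.1 / 2 ^ k *
      ∫⁻ l in Ico s (avg f c.1 c.2), ENNReal.ofReal (bvar (ind f l) (cube c.1 c.2)) := by
        unfold charge
        simp only [div_eq_mul_inv]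
        ring
    _ = ∫⁻ l in Ico s (avg f c.1 c.2),
        (3 / 4) ^ (k - c.1) * ENNReal.ofReal (bvar (ind f l) (cube c.1 c.2)) := by
        rw [e, lintegral_const_mul _ hmeas]
    _ ≤ _ := by
        refine lintegral_mono fun l => ?_
        refine mul_le_mul_right (ofReal_bvar_le (A 0) _ _ fun x hx => ?_) _
        exact hA.cell (k := c.1) (by rwa [mem_cube.1 hx])

theorem sum_charge_le (hA : IsAdmissible A K) (f : (Fin d → ℤ) → ℝ)
    (s : ℕ → (Fin d → ℤ) → ℝ) (R : ℕ → (Fin d → ℤ) → Finset (ℕ × (Fin d → ℤ)))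
    (hR : ∀ k m, IsSubfamily k m (R k m))
    (hs : ∀ k m, (R k m).Nonempty → s k m ∈ lowSet A f k m) :
    ∑ k ∈ Finset.range (K + 1), ∑' m, ∑ c ∈ R k m, charge f k (s k m) c / 2 ^ k ≤
      4 * avar (A 0) f := by
  classical
  set D : ℝ → (Fin d → ℤ) → ℝ≥0∞ := fun l x => dens (A 0) (ind f l) x with hD
  have hDm : ∀ x, Measurable fun l => D l x := fun x => measurable_dens_ind (A 0) f x
  set G : ℕ → (Fin d → ℤ) → ℕ × (Fin d → ℤ) → ℝ → ℝ≥0∞ := fun k m c =>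
    (Ico (s k m) (avg f c.1 c.2)).indicator
      (fun l => (3 / 4) ^ (k - c.1) * ∑ x ∈ cube c.1 c.2, D l x) with hG
  have hGm : ∀ k m c, Measurable (G k m c) := fun k m c =>
    (measurable_const.mul (Finset.measurable_sum _ fun x _ => hDm x)).indicator measurableSet_Ico
  have h1 : ∀ k m, ∀ c ∈ R k m, charge f k (s k m) c / 2 ^ k ≤ ∫⁻ l, G k m c l := fun k m c hc =>
    charge_div_le hA f (hs k m ⟨c, hc⟩).1.1 _ ((hR k m).sub c hc)
  have h2 : ∀ l, ∑ k ∈ Finset.range (K + 1), ∑' m, ∑ c ∈ R k m, G k m c l ≤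
      4 * ∑' x, D l x := by
    intro l
    have h3 : ∀ k m, ∑ c ∈ R k m, G k m c l = ∑ x ∈ cube k m,
        (∑ c ∈ R k (anc k x), (if anc c.1 x = c.2 ∧ l ∈ Ico (s k (anc k x)) (avg f c.1 c.2)
          then (3 / 4 : ℝ≥0∞) ^ (k - c.1) else 0)) * D l x := by
      intro k m
      have : ∀ x ∈ cube k m, (∑ c ∈ R k (anc k x),
          (if anc c.1 x = c.2 ∧ l ∈ Ico (s k (anc k x)) (avg f c.1 c.2)
          then (3 / 4 : ℝ≥0∞) ^ (k - c.1) else 0)) * D l x = ∑ c ∈ R k m,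
          (if anc c.1 x = c.2 ∧ l ∈ Ico (s k m) (avg f c.1 c.2)
          then (3 / 4 : ℝ≥0∞) ^ (k - c.1) * D l x else 0) := by
        intro x hx
        rw [mem_cube.1 hx, Finset.sum_mul]
        simp only [ite_mul, zero_mul]
      rw [Finset.sum_congr rfl this, Finset.sum_comm]
      refine Finset.sum_congr rfl fun c hc => ?_
      by_cases hl : l ∈ Ico (s k m) (avg f c.1 c.2)
      · simp only [hG, Set.indicator_of_mem hl, hl, and_true]
        rw [Finset.mul_sum]
        rw [← Finset.sum_filter]
        refine Finset.sum_congr ?_ fun _ _ => rfl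
        obtain ⟨hc1, hc2⟩ := (hR k m).sub c hc
        ext x
        rw [Finset.mem_filter, mem_cube, mem_cube]
        refine ⟨fun h => ⟨?_, h⟩, fun h => h.2⟩
        rw [← hc2, ← h, anc_anc, show c.1 + (k - c.1) = k by omega]
      · simp only [hG, Set.indicator_of_notMem hl, hl, and_false, if_false, Finset.sum_const_zero]
    simp only [h3]
    calc _ = ∑ k ∈ Finset.range (K + 1), ∑' x,
          (∑ c ∈ R k (anc k x), (if anc c.1 x = c.2 ∧ l ∈ Ico (s k (anc k x)) (avg f c.1 c.2)
          then (3 / 4 : ℝ≥0∞) ^ (k - c.1) else 0)) * D l x :=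
          Finset.sum_congr rfl fun k _ => tsum_cube (fun x => (∑ c ∈ R k (anc k x),
            (if anc c.1 x = c.2 ∧ l ∈ Ico (s k (anc k x)) (avg f c.1 c.2)
              then (3 / 4 : ℝ≥0∞) ^ (k - c.1) else 0)) * D l x) k
      _ ≤ ∑' x, 4 * D l x := by
          rw [← Summable.tsum_finsetSum fun _ _ => ENNReal.summable]
          refine ENNReal.tsum_le_tsum fun x => ?_
          rw [← Finset.sum_mul]
          gcongr
          exact sum_chain_le hA f s R hR hs x l
      _ = _ := ENNReal.tsum_mul_left
  calc _ ≤ ∑ k ∈ Finset.range (K + 1), ∑' m, ∑ c ∈ R k m, ∫⁻ l, G k m c l :=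
        Finset.sum_le_sum fun k _ => ENNReal.tsum_le_tsum fun m =>
          Finset.sum_le_sum fun c hc => h1 k m c hc
    _ = ∫⁻ l, ∑ k ∈ Finset.range (K + 1), ∑' m, ∑ c ∈ R k m, G k m c l := by
        have hm1 : ∀ k m, Measurable fun l => ∑ c ∈ R k m, G k m c l := fun k m =>
          Finset.measurable_sum _ fun c _ => hGm k m c
        rw [lintegral_finsetSum _ fun k _ => Measurable.tsum fun m => hm1 k m]
        refine Finset.sum_congr rfl fun k _ => ?_
        rw [lintegral_tsum fun m => (hm1 k m).aemeasurable]
        refine tsum_congr fun m => ?_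
        rw [lintegral_finsetSum _ fun c _ => hGm k m c]
    _ ≤ ∫⁻ l, 4 * avar (A 0) (ind f l) := lintegral_mono h2
    _ = _ := by
        rw [lintegral_const_mul _ (measurable_avar_ind _ _), lintegral_avar_ind]

/-- The constant in the discrete variation bound. -/
def gridConst (d : ℕ) : ℝ≥0∞ :=
  (1 + 2 * d * 2 ^ (d + 1)) + 2 * d * (2 * (3 * 2 ^ (d + 2)) * 4)

theorem gridConst_ne_top (d : ℕ) : gridConst d ≠ ∞ := by
  unfold gridConst
  finiteness

/-- The variation of the maximal function of a bounded, downward closed family of discrete dyadic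
cubes is controlled by the variation of the function. -/
theorem avar_max_le (hd : 1 ≤ d) (hA : IsAdmissible A K) (hg : IsMaxFun A f g) :
    avar (A 0) g ≤ gridConst d * avar (A 0) f := by
  classical
  choose s R S hS hLS hR hs hvol using exists_lowSet_cover hd A f
  have hlow : ∀ t k m, (if Top A f t k m ∧ 2 ^ (d + 1) * supCard f t (cube k m) < (2 ^ k) ^ d
      then ((2 ^ k) ^ d / 2 ^ k : ℝ≥0∞) else 0) ≤
      (S k m).indicator (fun _ => (2 ^ k) ^ d / 2 ^ k) t := by
    intro t k m
    split_ifs with h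
    · rw [Set.indicator_of_mem (hLS k m h)]
    · positivity
  have hm2 : ∀ k m, Measurable fun t =>
      (S k m).indicator (fun _ => ((2 ^ k) ^ d / 2 ^ k : ℝ≥0∞)) t := fun k m =>
    measurable_const.indicator (hS k m)
  calc avar (A 0) g = ∫⁻ t, avar (A 0) (ind g t) := (lintegral_avar_ind _ _).symm
    _ ≤ ∫⁻ t, ((1 + 2 * d * 2 ^ (d + 1)) * avar (A 0) (ind f t) +
        2 * d * ∑ k ∈ Finset.range (K + 1), ∑' m,
          (S k m).indicator (fun _ => ((2 ^ k) ^ d / 2 ^ k : ℝ≥0∞)) t) := by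
        refine lintegral_mono fun t => (avar_ind_max_le hA hg t).trans ?_
        gcongr with k hk m
        exact hlow t k m
    _ = (1 + 2 * d * 2 ^ (d + 1)) * avar (A 0) f +
        2 * d * ∑ k ∈ Finset.range (K + 1), ∑' m, (2 ^ k) ^ d / 2 ^ k * volume (S k m) := by
        rw [lintegral_add_left ((measurable_avar_ind _ _).const_mul _),
          lintegral_const_mul _ (measurable_avar_ind _ _), lintegral_avar_ind,
          lintegral_const_mul _ (Finset.measurable_sum _ fun k _ => Measurable.tsum (hm2 k)),
          lintegral_finsetSum _ fun k _ => Measurable.tsum (hm2 k)]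
        congr 2
        refine Finset.sum_congr rfl fun k _ => ?_
        rw [lintegral_tsum fun m => (hm2 k m).aemeasurable]
        refine tsum_congr fun m => ?_
        rw [lintegral_indicator_const (hS k m)]
    _ ≤ (1 + 2 * d * 2 ^ (d + 1)) * avar (A 0) f +
        2 * d * ∑ k ∈ Finset.range (K + 1), ∑' m,
          2 * (3 * 2 ^ (d + 2)) * ∑ c ∈ R k m, charge f k (s k m) c / 2 ^ k := by
        refine add_le_add le_rfl (mul_le_mul_right (Finset.sum_le_sum fun k _ =>
          ENNReal.tsum_le_tsum fun m => ?_) _)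
        have := hvol k m
        simp only [div_eq_mul_inv, ← Finset.sum_mul]
        calc ((2 ^ k) ^ d * (2 ^ k)⁻¹ * volume (S k m) : ℝ≥0∞)
            = volume (S k m) * (2 ^ k) ^ d * (2 ^ k)⁻¹ := by ring
          _ ≤ 2 * (3 * 2 ^ (d + 2)) * (∑ c ∈ R k m, charge f k (s k m) c) * (2 ^ k)⁻¹ :=
            mul_le_mul_left this _
          _ = _ := by rw [mul_assoc]
    _ ≤ (1 + 2 * d * 2 ^ (d + 1)) * avar (A 0) f +
        2 * d * (2 * (3 * 2 ^ (d + 2)) * (4 * avar (A 0) f)) := by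
        simp only [ENNReal.tsum_mul_left, ← Finset.mul_sum]
        gcongr
        exact sum_charge_le hA f s R hR hs
    _ = _ := by unfold gridConst; ring

end

/-- The dyadic cube of scale `2^s` and index `m`. -/
def dcube (s : ℤ) (m : Fin d → ℤ) : Set (Ed d) :=
  {x : Ed d | ∀ i, x i ∈ Set.Ico ((2:ℝ)^s * m i) ((2:ℝ)^s * (m i + 1))}

/-- The interior of the dyadic cube of scale `2^s` and index `m`. -/
def odcube (s : ℤ) (m : Fin d → ℤ) : Set (Ed d) :=
  {x : Ed d | ∀ i, x i ∈ Set.Ioo ((2:ℝ)^s * m i) ((2:ℝ)^s * (m i + 1))}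

/-- The index of the dyadic cube of scale `2^s` containing `x`. -/
def idx (s : ℤ) (x : Ed d) : Fin d → ℤ := fun i => ⌊x i / (2:ℝ)^s⌋

theorem mem_dcube {s : ℤ} {m : Fin d → ℤ} {x : Ed d} : x ∈ dcube s m ↔ idx s x = m := by
  rw [funext_iff]
  refine forall_congr' fun i => ?_
  have h : (0:ℝ) < 2 ^ s := by positivity
  rw [idx, Int.floor_eq_iff, le_div_iff₀ h, div_lt_iff₀ h, mem_Ico, mul_comm, mul_comm (2 ^ s : ℝ)]

theorem odcube_subset (s : ℤ) (m : Fin d → ℤ) : odcube s m ⊆ dcube s m :=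
  fun _ hx i => Ioo_subset_Ico_self (hx i)

theorem anc_idx (s : ℤ) (k : ℕ) (x : Ed d) : anc k (idx s x) = idx (s + k) x := by
  ext i
  simp only [anc, idx]
  rw [zpow_add₀ (by norm_num), ← div_div, zpow_natCast]
  have := Int.floor_div_natCast (x i / (2:ℝ) ^ s) (2 ^ k)
  push_cast at this
  exact this.symm

theorem mem_dcube_add {s : ℤ} {k : ℕ} {m : Fin d → ℤ} {x : Ed d} :
    x ∈ dcube (s + k) m ↔ idx s x ∈ cube k m := by
  rw [mem_cube, anc_idx, mem_dcube]

theorem dcube_add_eq (s : ℤ) (k : ℕ) (m : Fin d → ℤ) :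
    dcube (s + k) m = ⋃ p ∈ cube k m, dcube s p := by
  ext x
  rw [mem_dcube_add]
  simp [mem_dcube]

theorem dcube_subset (s : ℤ) {k : ℕ} {m p : Fin d → ℤ} (h : anc k p = m) :
    dcube s p ⊆ dcube (s + k) m := by
  intro x hx
  rw [mem_dcube] at *
  rw [← anc_idx, hx, h]

theorem dcube_disjoint {s : ℤ} {m p : Fin d → ℤ} (h : m ≠ p) :
    Disjoint (dcube s m) (dcube s p) := by
  rw [Set.disjoint_left]
  intro x h1 h2
  rw [mem_dcube] at *
  exact h (h1.symm.trans h2)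

theorem dcube_eq_preimage (s : ℤ) (m : Fin d → ℤ) :
    dcube s m = WithLp.ofLp ⁻¹'
      (Set.univ.pi fun i => Set.Ico ((2:ℝ)^s * m i) ((2:ℝ)^s * (m i + 1))) := by
  ext x; simp [dcube]

theorem odcube_eq_preimage (s : ℤ) (m : Fin d → ℤ) :
    odcube s m = WithLp.ofLp ⁻¹'
      (Set.univ.pi fun i => Set.Ioo ((2:ℝ)^s * m i) ((2:ℝ)^s * (m i + 1))) := by
  ext x; simp [odcube]

theorem isOpen_odcube (s : ℤ) (m : Fin d → ℤ) : IsOpen (odcube s m) := by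
  rw [odcube_eq_preimage]
  exact (isOpen_set_pi Set.finite_univ fun _ _ => isOpen_Ioo).preimage
    (PiLp.continuous_ofLp 2 _)

theorem measurableSet_dcube (s : ℤ) (m : Fin d → ℤ) : MeasurableSet (dcube s m) := by
  rw [dcube_eq_preimage]
  exact (MeasurableSet.univ_pi fun _ => measurableSet_Ico).preimage
    (PiLp.volume_preserving_ofLp (Fin d)).measurable

theorem odcube_ae_eq (s : ℤ) (m : Fin d → ℤ) : odcube s m =ᵐ[volume] dcube s m := by
  rw [dcube_eq_preimage, odcube_eq_preimage]
  exact (PiLp.volume_preserving_ofLp (Fin d)).quasiMeasurePreserving.preimage_ae_eq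
    (Measure.univ_pi_Ioo_ae_eq_Icc.trans Measure.univ_pi_Ico_ae_eq_Icc.symm)

theorem volume_dcube (s : ℤ) (m : Fin d → ℤ) :
    volume (dcube s m) = ENNReal.ofReal (((2:ℝ) ^ s) ^ d) := by
  rw [dcube_eq_preimage, (PiLp.volume_preserving_ofLp (Fin d)).measure_preimage
    (MeasurableSet.univ_pi fun _ => measurableSet_Ico).nullMeasurableSet, Real.volume_pi_Ico]
  have : ∀ i, (2:ℝ)^s * (m i + 1) - (2:ℝ)^s * m i = 2 ^ s := fun i => by ring
  simp [this, ENNReal.ofReal_pow (show (0:ℝ) ≤ 2 ^ s by positivity)]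

theorem volume_real_dcube (s : ℤ) (m : Fin d → ℤ) : volume.real (dcube s m) = ((2:ℝ) ^ s) ^ d := by
  rw [Measure.real, volume_dcube, ENNReal.toReal_ofReal (by positivity)]

theorem isBounded_dcube (s : ℤ) (m : Fin d → ℤ) : Bornology.IsBounded (dcube s m) := by
  rw [dcube_eq_preimage]
  refine (PiLp.antilipschitzWith_ofLp 2 _).isBounded_preimage ?_
  exact Bornology.IsBounded.pi fun i => Metric.isBounded_Ico _ _

theorem isCompact_closure_dcube (s : ℤ) (m : Fin d → ℤ) : IsCompact (closure (dcube s m)) :=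
  (isBounded_dcube s m).isCompact_closure

theorem idx_add_single (s : ℤ) (j : Fin d) (x : Ed d) :
    idx s (x + EuclideanSpace.single j ((2:ℝ) ^ s)) = nbr j (idx s x) := by
  ext i
  have h : (2:ℝ) ^ s ≠ 0 := by positivity
  by_cases hi : i = j
  · subst hi
    simp [idx, nbr, add_div, div_self h]
  · simp [idx, nbr, hi]

/-- Moving a point of a closed cube in direction `j` by at most a side length stays in the union of
the closed cube and its neighbour. -/
theorem add_single_mem_closure {s : ℤ} {j : Fin d} {x : Ed d} {m : Fin d → ℤ} {t : ℝ}
    (ht : t ∈ Icc 0 ((2:ℝ) ^ s)) (hx : x ∈ closure (dcube s m)) :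
    x + EuclideanSpace.single j t ∈ closure (dcube s m) ∪ closure (dcube s (nbr j m)) := by
  rw [← closure_union]
  refine map_mem_closure (f := fun y : Ed d => y + EuclideanSpace.single j t) (by fun_prop) hx ?_
  intro y hy
  have hj := hy j
  by_cases hlt : y j + t < (2:ℝ) ^ s * (m j + 1)
  · left
    intro i
    by_cases hi : i = j
    · subst hi
      simp only [PiLp.add_apply, PiLp.single_apply, if_true]
      exact ⟨by linarith [hj.1, ht.1], hlt⟩
    · simpa [hi] using hy i
  · right
    intro i
    by_cases hi : i = j
    · subst hi
      simp only [PiLp.add_apply, PiLp.single_apply, if_true, nbr, Function.update_self]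
      push_cast
      exact ⟨by linarith [hj.1, ht.1], by linarith [hj.2, ht.2]⟩
    · simpa [hi, nbr] using hy i

theorem divergence_smul_single {ψ : Ed d → ℝ} (hψ : ContDiff ℝ 1 ψ) (j : Fin d) (x : Ed d) :
    divergence (fun y => ψ y • EuclideanSpace.single j (1:ℝ)) x
      = fderiv ℝ ψ x (EuclideanSpace.single j 1) := by
  have hd : DifferentiableAt ℝ ψ x := hψ.differentiable (by simp) x
  unfold divergence
  rw [fderiv_smul_const hd]
  simp

/-- Integrating `f` against a directional derivative of a test function is bounded by the
variation. -/
theorem abs_integral_mul_fderiv_le {Ω : Set (Ed d)} {f : Ed d → ℝ} (hvar : var Ω f < ∞)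
    {ψ : Ed d → ℝ} (hψ : ContDiff ℝ 1 ψ) (hc : HasCompactSupport ψ) (hs : tsupport ψ ⊆ Ω)
    (h1 : ∀ x, |ψ x| ≤ 1) (j : Fin d) :
    |∫ x in Ω, f x * fderiv ℝ ψ x (EuclideanSpace.single j 1)| ≤ (var Ω f).toReal := by
  have key : ∀ θ : Ed d → ℝ, ContDiff ℝ 1 θ → HasCompactSupport θ → tsupport θ ⊆ Ω →
      (∀ x, |θ x| ≤ 1) →
      ∫ x in Ω, f x * fderiv ℝ θ x (EuclideanSpace.single j 1) ≤ (var Ω f).toReal := by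
    intro θ hθ hc hs h1
    refine (ENNReal.ofReal_le_iff_le_toReal hvar.ne).1 ?_
    have hle : ENNReal.ofReal (∫ x in Ω, f x *
        divergence (fun y => θ y • EuclideanSpace.single j (1:ℝ)) x) ≤ var Ω f := by
      refine le_iSup₂_of_le (fun y => θ y • EuclideanSpace.single j (1:ℝ)) ⟨?_, ?_, ?_, ?_⟩ le_rfl
      · exact hθ.smul contDiff_const
      · exact hc.smul_right
      · exact (closure_mono (Function.support_smul_subset_left θ _)).trans hs
      · intro x
        simpa [norm_smul] using h1 x
    simpa only [divergence_smul_single hθ] using hle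
  rw [abs_le']
  refine ⟨key ψ hψ hc hs h1, ?_⟩
  have hneg : (fun x => - ψ x) = -ψ := rfl
  have := key (-ψ) hψ.neg hc.neg (by rwa [tsupport_neg]) (by simpa using h1)
  simpa [fderiv_neg, integral_neg] using this

theorem abs_integral_translate_sub_le {Ω S : Set (Ed d)} (hΩ : IsOpen Ω) {f : Ed d → ℝ}
    (hf : LocallyIntegrableOn f Ω) (hvar : var Ω f < ∞) (hS : IsCompact S) (hSΩ : S ⊆ Ω)
    {η : Ed d → ℝ} (hη : ContDiff ℝ 1 η) (hc : HasCompactSupport η) (h1 : ∀ x, |η x| ≤ 1)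
    {j : Fin d} {h : ℝ} (hh : 0 ≤ h)
    (hmove : ∀ y ∈ tsupport η, ∀ t ∈ Icc 0 h, y + EuclideanSpace.single j t ∈ S) :
    |(∫ x in S, f x * η (x - EuclideanSpace.single j h)) - ∫ x in S, f x * η x|
      ≤ h * (var Ω f).toReal := by
  have hfS : IntegrableOn f S := hf.integrableOn_compact_subset hSΩ hS
  set e : Ed d := EuclideanSpace.single j 1 with he
  have hst : ∀ t : ℝ, EuclideanSpace.single j t = t • e := fun t => by
    ext i; by_cases hi : i = j <;> simp [he, hi]
  simp only [hst] at hmove ⊢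
  set η' : Ed d → ℝ := fun x => fderiv ℝ η x e with hη'
  have hη'c : Continuous η' := (hη.continuous_fderiv (by simp)).clm_apply continuous_const
  obtain ⟨C, hC⟩ := (hc.fderiv_apply ℝ e).exists_bound_of_continuous hη'c
  have hderiv : ∀ t : ℝ, HasDerivAt (fun t : ℝ => ∫ x in S, f x * η (x - t • e))
      (∫ x in S, f x * (- η' (x - t • e))) t := by
    intro t
    refine (hasDerivAt_integral_of_dominated_loc_of_deriv_le (F := fun t x => f x * η (x - t • e))
      (F' := fun t x => f x * (- η' (x - t • e)))
      (bound := fun x => ‖f x‖ * C) (s := univ) univ_mem ?_ ?_ ?_ ?_ ?_ ?_).2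
    · refine Eventually.of_forall fun u => hfS.aestronglyMeasurable.mul ?_
      exact (hη.continuous.comp (continuous_id.sub continuous_const)).aestronglyMeasurable
    · exact hfS.mul_bdd
        (hη.continuous.comp (continuous_id.sub continuous_const)).aestronglyMeasurable
        (Eventually.of_forall fun x => h1 _)
    · exact hfS.aestronglyMeasurable.mul
        (hη'c.comp (continuous_id.sub continuous_const)).neg.aestronglyMeasurable
    · refine Eventually.of_forall fun x u _ => ?_
      rw [norm_mul, norm_neg]
      exact mul_le_mul_of_nonneg_left (hC _) (norm_nonneg _)
    · exact hfS.norm.mul_const C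
    · refine Eventually.of_forall fun x u _ => HasDerivAt.const_mul (f x) ?_
      have hd := (hη.differentiable (by simp) (x - u • e)).hasFDerivAt
      have h2 : HasDerivAt (fun u : ℝ => x - u • e) (-e) u := by
        simpa using ((hasDerivAt_id u).smul_const e).const_sub x
      have h3 := hd.comp_hasDerivAt u h2
      rw [map_neg] at h3
      exact h3
  have hbound : ∀ t ∈ Icc 0 h, ‖∫ x in S, f x * (- η' (x - t • e))‖ ≤ (var Ω f).toReal := by
    intro t ht
    set ψ : Ed d → ℝ := fun x => η (x - t • e) with hψdef
    have hψ : ContDiff ℝ 1 ψ := hη.comp (contDiff_id.sub contDiff_const)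
    have hsupp : tsupport ψ ⊆ S := by
      intro x hx
      have := tsupport_comp_subset_preimage η (f := fun x : Ed d => x - t • e) (by fun_prop) hx
      simpa using hmove _ this t ht
    have hcψ : HasCompactSupport ψ :=
      hS.of_isClosed_subset (isClosed_tsupport _) hsupp
    have hfd : ∀ x, fderiv ℝ ψ x e = η' (x - t • e) := by
      intro x
      have hd := (hη.differentiable (by simp) (x - t • e)).hasFDerivAt
      have h2 : HasFDerivAt (fun x : Ed d => x - t • e) (ContinuousLinearMap.id ℝ (Ed d)) x :=
        (hasFDerivAt_id x).sub_const _
      have h3 : HasFDerivAt ψ _ x := hd.comp x h2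
      rw [h3.fderiv]
      rfl
    have := abs_integral_mul_fderiv_le hvar hψ hcψ (hsupp.trans hSΩ) (fun x => h1 _) j
    rw [setIntegral_eq_of_subset_of_forall_sdiff_eq_zero hΩ.measurableSet hSΩ] at this
    · simp only [← he, hfd] at this
      simpa [integral_neg] using this
    · intro x hx
      have hx0 : x ∉ tsupport (fun y => fderiv ℝ ψ y e) := fun h' =>
        hx.2 (hsupp (tsupport_fderiv_apply_subset ℝ e h'))
      rw [image_eq_zero_of_notMem_tsupport hx0, mul_zero]
  have := (convex_Icc (0:ℝ) h).norm_image_sub_le_of_norm_hasDerivWithin_le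
    (fun t _ => (hderiv t).hasDerivWithinAt) hbound (left_mem_Icc.2 hh) (right_mem_Icc.2 hh)
  simpa [abs_of_nonneg hh, mul_comm h] using this

theorem mem_odcube_add_single {s : ℤ} {j : Fin d} {x : Ed d} {m : Fin d → ℤ} :
    x - EuclideanSpace.single j ((2:ℝ) ^ s) ∈ odcube s m ↔ x ∈ odcube s (nbr j m) := by
  refine forall_congr' fun i => ?_
  by_cases hi : i = j
  · subst hi
    simp only [PiLp.sub_apply, PiLp.single_apply, if_true, nbr, Function.update_self, mem_Ioo]
    push_cast
    constructor <;> rintro ⟨h1, h2⟩ <;> constructor <;> linarith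
  · simp [hi, nbr]

theorem setIntegral_mul_sum_indicator {ι : Type*} {f : Ed d → ℝ} {S : Set (Ed d)}
    (hf : IntegrableOn f S) (K : Finset ι) (ε : ι → ℝ) (T : ι → Set (Ed d))
    (hT : ∀ x ∈ K, MeasurableSet (T x)) (hTS : ∀ x ∈ K, T x ⊆ S) :
    ∫ y in S, f y * ∑ x ∈ K, ε x * (T x).indicator 1 y = ∑ x ∈ K, ε x * ∫ y in T x, f y := by
  have h : ∀ y, f y * ∑ x ∈ K, ε x * (T x).indicator 1 y
      = ∑ x ∈ K, ε x * (T x).indicator f y := by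
    intro y
    rw [Finset.mul_sum]
    refine Finset.sum_congr rfl fun x _ => ?_
    by_cases hy : y ∈ T x <;> simp [hy, mul_comm]
  simp only [h]
  rw [integral_finsetSum _ fun x hx => ((hf.indicator (hT x hx)).const_mul _)]
  refine Finset.sum_congr rfl fun x hx => ?_
  rw [integral_const_mul, setIntegral_indicator (hT x hx), inter_eq_right.2 (hTS x hx)]

theorem abs_sum_le_one {ι : Type*} (K : Finset ι) (a : ι → ℝ) (p : ι)
    (h0 : ∀ x, x ≠ p → a x = 0) (h1 : |a p| ≤ 1) : |∑ x ∈ K, a x| ≤ 1 := by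
  by_cases hp : p ∈ K
  · rwa [Finset.sum_eq_single_of_mem p hp fun x _ hx => h0 x hx]
  · rw [Finset.sum_eq_zero fun x hx => h0 x fun h => hp (h ▸ hx)]
    simp

theorem sum_abs_integral_sub_le {Ω : Set (Ed d)} (hΩ : IsOpen Ω) {f : Ed d → ℝ}
    (hf : LocallyIntegrableOn f Ω) (hvar : var Ω f < ∞) (s : ℤ) (j : Fin d)
    (K : Finset (Fin d → ℤ))
    (hK : ∀ x ∈ K, closure (dcube s x) ⊆ Ω ∧ closure (dcube s (nbr j x)) ⊆ Ω) :
    ∑ x ∈ K, |(∫ y in dcube s (nbr j x), f y) - ∫ y in dcube s x, f y|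
      ≤ 2 ^ s * (var Ω f).toReal := by
  choose φ hφs hφc hφr using fun x : Fin d → ℤ =>
    (isOpen_odcube s x).exists_contDiff_support_eq (n := 1)
  set Δ : (Fin d → ℤ) → ℝ := fun x =>
    (∫ y in dcube s (nbr j x), f y) - ∫ y in dcube s x, f y with hΔ
  set ε : (Fin d → ℤ) → ℝ := fun x => if 0 ≤ Δ x then 1 else -1 with hε
  have hε1 : ∀ x, |ε x| = 1 := fun x => by simp only [hε]; split_ifs <;> simp
  have hεΔ : ∀ x, ε x * Δ x = |Δ x| := fun x => by
    simp only [hε]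
    split_ifs with h
    · rw [abs_of_nonneg h, one_mul]
    · rw [abs_of_neg (not_le.1 h)]; ring
  have hφ01 : ∀ x y, 0 ≤ φ x y ∧ φ x y ≤ 1 := fun x y => hφr x ⟨y, rfl⟩
  have hφ0 : ∀ x y, y ∉ odcube s x → φ x y = 0 := fun x y h => by
    rwa [← hφs x, Function.notMem_support] at h
  set S : Set (Ed d) := ⋃ x ∈ K, (closure (dcube s x) ∪ closure (dcube s (nbr j x))) with hSdef
  have hS : IsCompact S := K.isCompact_biUnion fun x _ =>
    (isCompact_closure_dcube s x).union (isCompact_closure_dcube s _)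
  have hSΩ : S ⊆ Ω := iUnion₂_subset fun x hx => union_subset (hK x hx).1 (hK x hx).2
  have hfS : IntegrableOn f S := hf.integrableOn_compact_subset hSΩ hS
  set η : ℕ → Ed d → ℝ := fun n y => ∑ x ∈ K, ε x * (1 - (1 - φ x y) ^ n) with hη
  have hηc : ∀ n, ContDiff ℝ 1 (η n) := fun n =>
    ContDiff.sum fun x _ => contDiff_const.mul (contDiff_const.sub ((contDiff_const.sub
      (hφc x)).pow n))
  have hη1 : ∀ n y, |η n y| ≤ 1 := by
    intro n y
    refine abs_sum_le_one K _ (idx s y) (fun x hx => ?_) ?_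
    · have : y ∉ odcube s x := fun h => hx (mem_dcube.1 (odcube_subset s x h)).symm
      simp [hφ0 x y this]
    · rw [abs_mul, hε1, one_mul]
      have h1 := hφ01 (idx s y) y
      have h2 : 0 ≤ 1 - φ (idx s y) y := by linarith
      have h3 := pow_nonneg h2 n
      have h4 := pow_le_one₀ (n := n) h2 (by linarith)
      rw [abs_le]
      constructor <;> linarith
  have hηs : ∀ n, tsupport (η n) ⊆ ⋃ x ∈ K, closure (dcube s x) := by
    intro n
    refine closure_minimal ?_ (K.finite_toSet.isClosed_biUnion fun x _ => isClosed_closure)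
    intro y hy
    by_contra hy'
    refine hy (Finset.sum_eq_zero fun x hx => ?_)
    have : y ∉ odcube s x := fun h => hy' (mem_biUnion (show x ∈ (K : Set _) from hx)
      (subset_closure (odcube_subset s x h)))
    simp [hφ0 x y this]
  have hηcs : ∀ n, HasCompactSupport (η n) := fun n =>
    (K.isCompact_biUnion fun x _ => isCompact_closure_dcube s x).of_isClosed_subset
      (isClosed_tsupport _) (hηs n)
  have hbound : ∀ n, |(∫ y in S, f y * η n (y - EuclideanSpace.single j ((2:ℝ) ^ s)))
      - ∫ y in S, f y * η n y| ≤ 2 ^ s * (var Ω f).toReal := by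
    intro n
    refine abs_integral_translate_sub_le hΩ hf hvar hS hSΩ (hηc n) (hηcs n) (hη1 n)
      (by positivity) fun y hy t ht => ?_
    obtain ⟨x, hx, hyx⟩ := mem_iUnion₂.1 (hηs n hy)
    exact mem_iUnion₂.2 ⟨x, hx, add_single_mem_closure ht hyx⟩
  set L : Ed d → ℝ := fun y => ∑ x ∈ K, ε x * (odcube s x).indicator 1 y with hL
  have hlim : ∀ y, Tendsto (fun n => η n y) atTop (𝓝 (L y)) := by
    intro y
    refine tendsto_finsetSum _ fun x _ => Tendsto.const_mul _ ?_
    by_cases hy : y ∈ odcube s x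
    · have hpos : 0 < φ x y := lt_of_le_of_ne (hφ01 x y).1 fun h => by
        rw [← hφs x] at hy; exact hy h.symm
      have := tendsto_pow_atTop_nhds_zero_of_lt_one (r := 1 - φ x y)
        (by linarith [(hφ01 x y).2]) (by linarith)
      simpa [hy] using this.const_sub 1
    · simp [hy, hφ0 x y hy]
  have htend : ∀ v : Ed d, Tendsto (fun n => ∫ y in S, f y * η n (y - v)) atTop
      (𝓝 (∫ y in S, f y * L (y - v))) := by
    intro v
    refine tendsto_integral_of_dominated_convergence (fun y => ‖f y‖) ?_ hfS.norm ?_ ?_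
    · exact fun n => hfS.aestronglyMeasurable.mul
        ((hηc n).continuous.comp (continuous_id.sub continuous_const)).aestronglyMeasurable
    · refine fun n => Eventually.of_forall fun y => ?_
      rw [norm_mul]
      exact mul_le_of_le_one_right (norm_nonneg _) (hη1 n _)
    · exact Eventually.of_forall fun y => (hlim _).const_mul _
  have h0 : ∫ y in S, f y * L y = ∑ x ∈ K, ε x * ∫ y in dcube s x, f y := by
    rw [setIntegral_mul_sum_indicator hfS K ε (odcube s)
      (fun x _ => (isOpen_odcube s x).measurableSet) fun x hx => ?_]
    · exact Finset.sum_congr rfl fun x _ => by rw [setIntegral_congr_set (odcube_ae_eq s x)]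
    · exact fun y hy => mem_iUnion₂.2 ⟨x, hx, Or.inl (subset_closure (odcube_subset s _ hy))⟩
  have h1 : ∫ y in S, f y * L (y - EuclideanSpace.single j ((2:ℝ) ^ s))
      = ∑ x ∈ K, ε x * ∫ y in dcube s (nbr j x), f y := by
    have : ∀ y, L (y - EuclideanSpace.single j ((2:ℝ) ^ s))
        = ∑ x ∈ K, ε x * (odcube s (nbr j x)).indicator 1 y := fun y => by
      refine Finset.sum_congr rfl fun x _ => ?_
      have h := mem_odcube_add_single (s := s) (j := j) (x := y) (m := x)
      by_cases hy : y ∈ odcube s (nbr j x)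
      · simp [hy, h.2 hy]
      · simp [hy, mt h.1 hy]
    simp only [this]
    rw [setIntegral_mul_sum_indicator hfS K ε (fun x => odcube s (nbr j x))
      (fun x _ => (isOpen_odcube s _).measurableSet) fun x hx => ?_]
    · exact Finset.sum_congr rfl fun x _ => by rw [setIntegral_congr_set (odcube_ae_eq s _)]
    · exact fun y hy => mem_iUnion₂.2 ⟨x, hx, Or.inr (subset_closure (odcube_subset s _ hy))⟩
  have hfin := le_of_tendsto ((htend _).sub (by simpa using htend 0)).abs
    (Eventually.of_forall hbound)
  rw [h0, h1, ← Finset.sum_sub_distrib] at hfin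
  refine le_trans (le_of_eq ?_) ((le_abs_self _).trans hfin)
  exact Finset.sum_congr rfl fun x _ => by rw [← mul_sub, ← hεΔ]

/-- The cube of scale `2^s` and index `m` is admissible for the local maximal function. -/
def Adm (Ω : Set (Ed d)) (s : ℤ) (m : Fin d → ℤ) : Prop := closure (dcube s m) ⊆ Ω

/-- Averages of `f` over the cubes of scale `2^s`. -/
def cavg (f : Ed d → ℝ) (s : ℤ) (m : Fin d → ℤ) : ℝ := ⨍ z in dcube s m, f z

theorem cavg_eq (f : Ed d → ℝ) (s : ℤ) (m : Fin d → ℤ) :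
    cavg f s m = (∫ z in dcube s m, f z) / ((2:ℝ) ^ s) ^ d := by
  rw [cavg, setAverage_eq, volume_real_dcube, smul_eq_mul, inv_mul_eq_div]

theorem avar_cavg_le {Ω : Set (Ed d)} (hΩ : IsOpen Ω) {f : Ed d → ℝ}
    (hf : LocallyIntegrableOn f Ω) (hvar : var Ω f < ∞) (s : ℤ) :
    avar (Adm Ω s) (cavg f s) * ENNReal.ofReal (((2:ℝ) ^ s) ^ d)
      ≤ d * (ENNReal.ofReal (2 ^ s) * var Ω f) := by
  classical
  rw [avar, ← ENNReal.tsum_mul_right, ENNReal.tsum_eq_iSup_sum]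
  refine iSup_le fun K => ?_
  have hpos : (0:ℝ) < ((2:ℝ) ^ s) ^ d := by positivity
  have hterm : ∀ x, dens (Adm Ω s) (cavg f s) x * ENNReal.ofReal (((2:ℝ) ^ s) ^ d)
      = ∑ j, if Adm Ω s x ∧ Adm Ω s (nbr j x) then
        ENNReal.ofReal |(∫ y in dcube s (nbr j x), f y) - ∫ y in dcube s x, f y| else 0 := by
    intro x
    rw [dens, Finset.sum_mul]
    refine Finset.sum_congr rfl fun j _ => ?_
    split_ifs with h
    · rw [← ENNReal.ofReal_mul (abs_nonneg _), cavg_eq, cavg_eq, ← sub_div, abs_div,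
        abs_of_pos hpos, div_mul_cancel₀ _ hpos.ne']
    · simp
  simp only [hterm]
  rw [Finset.sum_comm]
  have hdir : ∀ j ∈ (Finset.univ : Finset (Fin d)),
      ∑ x ∈ K, (if Adm Ω s x ∧ Adm Ω s (nbr j x) then
        ENNReal.ofReal |(∫ y in dcube s (nbr j x), f y) - ∫ y in dcube s x, f y| else 0)
      ≤ ENNReal.ofReal (2 ^ s) * var Ω f := by
    intro j _
    rw [← Finset.sum_filter, ← ENNReal.ofReal_sum_of_nonneg fun _ _ => abs_nonneg _,
      ← ENNReal.ofReal_toReal hvar.ne, ← ENNReal.ofReal_mul (by positivity)]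
    refine ENNReal.ofReal_le_ofReal (sum_abs_integral_sub_le hΩ hf hvar s j _ fun x hx => ?_)
    exact (Finset.mem_filter.1 hx).2
  refine (Finset.sum_le_sum hdir).trans_eq ?_
  simp

/-- The discrete maximal function with respect to the family `A` of cubes. -/
def gmax (A : ℕ → (Fin d → ℤ) → Prop) (f : (Fin d → ℤ) → ℝ) (x : Fin d → ℤ) : ℝ :=
  sSup ((fun k => avg f k (anc k x)) '' {k | A k (anc k x)})

theorem isMaxFun_gmax {A : ℕ → (Fin d → ℤ) → Prop} {K : ℕ} (hA : IsAdmissible A K)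
    (f : (Fin d → ℤ) → ℝ) : IsMaxFun A f (gmax A f) := by
  intro x hx t
  have hfin : {k | A k (anc k x)}.Finite := (finite_Iic K).subset fun k hk => hA.le k _ hk
  rw [gmax, lt_csSup_iff (hfin.image _).bddAbove ⟨_, 0, by simpa using hx, rfl⟩]
  simp

/-- The weak type estimate for the dyadic maximal function of a cube. -/
theorem card_mul_le_sum {h : (Fin d → ℤ) → ℝ} (hh : ∀ x, 0 ≤ h x) (B : ℝ) (k₀ : ℕ)
    (m₀ : Fin d → ℤ) :
    ∑ x ∈ cube k₀ m₀, {x | ∃ k ≤ k₀, B < avg h k (anc k x)}.indicator (fun _ => B) x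
      ≤ ∑ x ∈ cube k₀ m₀, h x := by
  rcases lt_or_ge B 0 with hB | hB
  · exact Finset.sum_le_sum fun x _ => (indicator_nonpos (fun _ _ => hB.le) x).trans (hh x)
  induction k₀ generalizing m₀ with
  | zero =>
    simp only [cube_zero, Finset.sum_singleton]
    refine indicator_le' (fun x hx => ?_) (fun x _ => hh x) m₀
    obtain ⟨k, hk, hx⟩ := hx
    obtain rfl : k = 0 := by omega
    simpa using hx.le
  | succ k₀ ih =>
    by_cases hm : B < avg h (k₀ + 1) m₀
    · calc ∑ x ∈ cube (k₀ + 1) m₀, _ ≤ ∑ x ∈ cube (k₀ + 1) m₀, B :=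
            Finset.sum_le_sum fun x _ => indicator_le_self' (fun _ _ => hB) x
        _ = B * (2 ^ (k₀ + 1)) ^ d := by
            rw [Finset.sum_const, card_cube, nsmul_eq_mul, mul_comm]; push_cast; rfl
        _ ≤ avg h (k₀ + 1) m₀ * (2 ^ (k₀ + 1)) ^ d := by gcongr
        _ = _ := avg_mul h _ _
    · rw [sum_cube_add _ k₀ 1, sum_cube_add _ k₀ 1]
      refine Finset.sum_le_sum fun p hp => le_trans (le_of_eq ?_) (ih p)
      refine Finset.sum_congr rfl fun x hx => ?_
      rw [mem_cube] at hp hx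
      have : (∃ k ≤ k₀ + 1, B < avg h k (anc k x)) ↔ ∃ k ≤ k₀, B < avg h k (anc k x) := by
        refine ⟨fun ⟨k, hk, hk'⟩ => ?_, fun ⟨k, hk, hk'⟩ => ⟨k, by omega, hk'⟩⟩
        rcases eq_or_lt_of_le hk with rfl | hlt
        · rw [← anc_anc, hx, hp] at hk'
          exact absurd hk' hm
        · exact ⟨k, by omega, hk'⟩
      simp only [indicator, mem_ofPred_eq, this]

/-- A discrete Poincaré type inequality: if `g` is at most `B` wherever a dyadic maximal function
is, and the average of the underlying function is at most `B / 2`, then the excess of `g` over `B`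
is bounded by the variation of `g`. -/
theorem sum_posPart_sub_le (hd : 1 ≤ d) {g h : (Fin d → ℤ) → ℝ} (hh : ∀ x, 0 ≤ h x) {B : ℝ}
    (hB : 0 < B) {k₀ : ℕ} {m₀ : Fin d → ℤ} (havg : 2 * avg h k₀ m₀ ≤ B)
    (hg : ∀ x ∈ cube k₀ m₀, (∀ k ≤ k₀, avg h k (anc k x) ≤ B) → g x ≤ B) :
    ∑ x ∈ cube k₀ m₀, max (g x - B) 0 ≤ 2 * 2 ^ k₀ * bvar g (cube k₀ m₀) := by
  classical
  set Q := cube k₀ m₀ with hQ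
  set E : Set (Fin d → ℤ) := {x | ∃ k ≤ k₀, B < avg h k (anc k x)} with hE
  have hN : (0:ℝ) < (2 ^ k₀) ^ d := by positivity
  have hcard : (∑ x ∈ Q, (1:ℝ)) = (2 ^ k₀) ^ d := by
    rw [Finset.sum_const, hQ, card_cube, nsmul_eq_mul, mul_one]; push_cast; rfl
  have hbad : 2 * ∑ x ∈ Q, E.indicator 1 x ≤ ((2:ℝ) ^ k₀) ^ d := by
    have h1 := card_mul_le_sum hh B k₀ m₀
    rw [← hQ, ← hE, hQ, ← avg_mul h, ← hQ] at h1
    have h2 : ∑ x ∈ Q, E.indicator (fun _ => B) x = B * ∑ x ∈ Q, E.indicator 1 x := by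
      rw [Finset.mul_sum]
      refine Finset.sum_congr rfl fun x _ => ?_
      by_cases hx : x ∈ E <;> simp [hx]
    rw [h2] at h1
    have h3 : B * (2 * ∑ x ∈ Q, E.indicator 1 x) ≤ B * (2 ^ k₀) ^ d := by nlinarith
    exact le_of_mul_le_mul_left h3 hB
  have hgood : ((2:ℝ) ^ k₀) ^ d ≤ 2 * ∑ y ∈ Q, Eᶜ.indicator 1 y := by
    have : ∑ x ∈ Q, E.indicator (1 : (Fin d → ℤ) → ℝ) x + ∑ x ∈ Q, Eᶜ.indicator 1 x
        = (2 ^ k₀) ^ d := by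
      rw [← Finset.sum_add_distrib, ← hcard]
      refine Finset.sum_congr rfl fun x _ => ?_
      by_cases hx : x ∈ E <;> simp [hx]
    linarith
  have hP := sum_sum_abs_sub_le g (fun i => 2 ^ k₀ * m₀ i) (2 ^ k₀) hd
  change ∑ x ∈ Q, ∑ y ∈ Q, |g x - g y| ≤ _ * bvar g Q at hP
  push_cast at hP
  set T := ∑ x ∈ Q, max (g x - B) 0 with hT
  have hT0 : 0 ≤ T := Finset.sum_nonneg fun _ _ => le_max_right _ _
  have hTle : T * ∑ y ∈ Q, Eᶜ.indicator 1 y ≤ ∑ x ∈ Q, ∑ y ∈ Q, |g x - g y| := by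
    rw [hT, Finset.sum_mul_sum]
    refine Finset.sum_le_sum fun x _ => Finset.sum_le_sum fun y hy => ?_
    by_cases hyE : y ∈ E
    · simp [hyE]
    · have hgy : g y ≤ B := hg y hy fun k hk => not_lt.1 fun h' => hyE ⟨k, hk, h'⟩
      simp only [mem_compl_iff, hyE, not_false_eq_true, indicator_of_mem, Pi.one_apply, mul_one]
      exact max_le ((by linarith : g x - B ≤ g x - g y).trans (le_abs_self _)) (abs_nonneg _)
  have h5 : (2 ^ k₀) ^ d * T ≤ (2 ^ k₀) ^ d * (2 * 2 ^ k₀ * bvar g Q) := by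
    calc (2 ^ k₀) ^ d * T ≤ (2 * ∑ y ∈ Q, Eᶜ.indicator 1 y) * T := by gcongr
      _ = 2 * (T * ∑ y ∈ Q, Eᶜ.indicator 1 y) := by ring
      _ ≤ 2 * ((2 ^ k₀) ^ (d + 1) * bvar g Q) := by linarith
      _ = _ := by ring
  exact le_of_mul_le_mul_left h5 hN

theorem measurable_idx (s : ℤ) : Measurable (idx s : Ed d → Fin d → ℤ) := by
  refine measurable_pi_lambda _ fun i => Int.measurable_floor.comp ?_
  have : Continuous fun x : Ed d => x i / (2:ℝ) ^ s := by fun_prop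
  exact this.measurable

theorem iUnion_dcube (s : ℤ) : ⋃ m, dcube s m = (univ : Set (Ed d)) :=
  eq_univ_of_forall fun x => mem_iUnion.2 ⟨idx s x, mem_dcube.2 rfl⟩

theorem setLIntegral_comp_idx (s : ℤ) (u : (Fin d → ℤ) → ℝ≥0∞) (m : Fin d → ℤ) :
    ∫⁻ y in dcube s m, u (idx s y) = u m * ENNReal.ofReal (((2:ℝ) ^ s) ^ d) := by
  rw [setLIntegral_congr_fun (g := fun _ => u m) (measurableSet_dcube s m)
    fun y hy => by rw [mem_dcube.1 hy], setLIntegral_const, volume_dcube]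

theorem lintegral_comp_idx (s : ℤ) (u : (Fin d → ℤ) → ℝ≥0∞) :
    ∫⁻ y : Ed d, u (idx s y) = (∑' m, u m) * ENNReal.ofReal (((2:ℝ) ^ s) ^ d) := by
  rw [← setLIntegral_univ, ← iUnion_dcube s, lintegral_iUnion (measurableSet_dcube s)
    fun m p h => dcube_disjoint h, ← ENNReal.tsum_mul_right]
  exact tsum_congr fun m => setLIntegral_comp_idx s u m

theorem finite_idx_image (s : ℤ) {K : Set (Ed d)} (hK : Bornology.IsBounded K) :
    (idx s '' K).Finite := by
  obtain ⟨C, hC⟩ := hK.exists_norm_le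
  have h2 : (0:ℝ) < 2 ^ s := by positivity
  refine (Set.finite_Icc (fun _ => ⌊-C / 2 ^ s⌋) (fun _ => ⌊C / 2 ^ s⌋)).subset ?_
  rintro _ ⟨x, hx, rfl⟩
  have hx' : ∀ i, |x i| ≤ C := fun i => (PiLp.norm_apply_le x i).trans (hC x hx)
  constructor <;> intro i
  · exact Int.floor_le_floor (by gcongr; exact (abs_le.1 (hx' i)).1)
  · exact Int.floor_le_floor (by gcongr; exact (abs_le.1 (hx' i)).2)

theorem exists_abs_comp_idx_le (s : ℤ) (u : (Fin d → ℤ) → ℝ) {K : Set (Ed d)}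
    (hK : Bornology.IsBounded K) : ∃ c, ∀ y ∈ K, |u (idx s y)| ≤ c := by
  obtain ⟨c, hc⟩ := ((finite_idx_image s hK).image fun m => |u m|).bddAbove
  exact ⟨c, fun y hy => hc ⟨_, ⟨y, hy, rfl⟩, rfl⟩⟩

theorem measurable_comp_idx (s : ℤ) (u : (Fin d → ℤ) → ℝ) :
    Measurable fun y : Ed d => u (idx s y) :=
  (measurable_of_countable u).comp (measurable_idx s)

theorem locallyIntegrable_comp_idx (s : ℤ) (u : (Fin d → ℤ) → ℝ) :
    LocallyIntegrable fun y : Ed d => u (idx s y) := by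
  rw [locallyIntegrable_iff]
  intro K hK
  obtain ⟨c, hc⟩ := exists_abs_comp_idx_le s u hK.isBounded
  refine IntegrableOn.of_bound hK.measure_lt_top
    (measurable_comp_idx s u).aestronglyMeasurable c ?_
  exact (ae_restrict_iff' hK.measurableSet).2 (Eventually.of_forall hc)

theorem avg_cavg {f : Ed d → ℝ} (s : ℤ) (k : ℕ) (m : Fin d → ℤ)
    (hf : IntegrableOn f (dcube (s + k) m)) : avg (cavg f s) k m = cavg f (s + k) m := by
  have h1 : ∑ p ∈ cube k m, ∫ z in dcube s p, f z = ∫ z in dcube (s + k) m, f z := by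
    rw [dcube_add_eq, integral_biUnion_finset _ (fun p _ => measurableSet_dcube s p)
      (fun p _ q _ h => dcube_disjoint h)]
    exact fun p hp => hf.mono_set (dcube_subset s (mem_cube.1 hp))
  rw [avg, cavg_eq, ← h1]
  simp only [cavg_eq]
  rw [← Finset.sum_div, div_div, zpow_add₀ (by norm_num), zpow_natCast, mul_pow]

theorem Adm.mono {Ω : Set (Ed d)} {s : ℤ} {k : ℕ} {m : Fin d → ℤ}
    (h : Adm Ω (s + k) (anc k m)) : Adm Ω s m :=
  (closure_mono (dcube_subset s rfl)).trans h

theorem Adm.integrableOn {Ω : Set (Ed d)} {f : Ed d → ℝ} (hf : LocallyIntegrableOn f Ω) {s : ℤ}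
    {m : Fin d → ℤ} (h : Adm Ω s m) : IntegrableOn f (dcube s m) :=
  (hf.integrableOn_compact_subset h (isCompact_closure_dcube s m)).mono_set subset_closure

/-- The admissible cubes with scales between `2^(-n)` and `2^n`, on the grid of scale `2^(-n)`. -/
def gridAdm (Ω : Set (Ed d)) (n k : ℕ) (m : Fin d → ℤ) : Prop :=
  k ≤ 2 * n ∧ Adm Ω (-n + k) m

theorem isAdmissible_gridAdm (Ω : Set (Ed d)) (n : ℕ) : IsAdmissible (gridAdm Ω n) (2 * n) where
  down k m h := by
    refine ⟨by have := h.1; omega, ?_⟩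
    refine Adm.mono (k := 1) ?_
    have := h.2
    push_cast at this ⊢
    rwa [add_assoc]
  le k m h := h.1

theorem gridAdm_zero (Ω : Set (Ed d)) (n : ℕ) : gridAdm Ω n 0 = Adm Ω (-n) := by
  ext m; simp [gridAdm]

/-- The maximal function restricted to cubes with scales between `2^(-n)` and `2^n`, as a function
on the grid of scale `2^(-n)`. -/
def gridMax (Ω : Set (Ed d)) (f : Ed d → ℝ) (n : ℕ) : (Fin d → ℤ) → ℝ :=
  gmax (gridAdm Ω n) (cavg f (-n))

theorem avar_gridMax_le (hd : 1 ≤ d) {Ω : Set (Ed d)} (hΩ : IsOpen Ω) {f : Ed d → ℝ}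
    (hf : LocallyIntegrableOn f Ω) (hvar : var Ω f < ∞) (n : ℕ) :
    avar (Adm Ω (-n)) (gridMax Ω f n) * ENNReal.ofReal (((2:ℝ) ^ (-n : ℤ)) ^ d)
      ≤ gridConst d * d * (ENNReal.ofReal (2 ^ (-n : ℤ)) * var Ω f) := by
  have h := avar_max_le hd (isAdmissible_gridAdm Ω n)
    (isMaxFun_gmax (isAdmissible_gridAdm Ω n) (cavg f (-n)))
  rw [gridAdm_zero] at h
  calc _ ≤ gridConst d * avar (Adm Ω (-n)) (cavg f (-n))
        * ENNReal.ofReal (((2:ℝ) ^ (-n : ℤ)) ^ d) := by gcongr; exact h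
    _ ≤ gridConst d * (d * (ENNReal.ofReal (2 ^ (-n : ℤ)) * var Ω f)) := by
        rw [mul_assoc]
        exact mul_le_mul_right (avar_cavg_le hΩ hf hvar _) _
    _ = _ := by ring

/-- The averages of `f` over the admissible cubes containing `y`. -/
def admAvgs (Ω : Set (Ed d)) (f : Ed d → ℝ) (y : Ed d) : Set ℝ :=
  (fun s => cavg f s (idx s y)) '' {s | Adm Ω s (idx s y)}

theorem dyadicMaxFun_eq (Ω : Set (Ed d)) (f : Ed d → ℝ) (y : Ed d) :
    dyadicMaxFun Ω f y = sSup (admAvgs Ω f y) := by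
  unfold dyadicMaxFun admAvgs
  congr 1
  ext t
  simp only [mem_image, mem_ofPred_eq]
  constructor
  · rintro ⟨_, ⟨s, m, rfl⟩, hy, hcl, rfl⟩
    have : idx s y = m := mem_dcube.1 hy
    subst this
    exact ⟨s, hcl, rfl⟩
  · rintro ⟨s, hs, rfl⟩
    exact ⟨_, ⟨s, _, rfl⟩, mem_dcube.2 rfl, hs, rfl⟩

theorem gridMax_idx {Ω : Set (Ed d)} {f : Ed d → ℝ} (hf : LocallyIntegrableOn f Ω) (n : ℕ)
    (y : Ed d) : gridMax Ω f n (idx (-n) y)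
      = sSup ((fun s => cavg f s (idx s y)) '' {s | Adm Ω s (idx s y) ∧ -n ≤ s ∧ s ≤ n}) := by
  unfold gridMax gmax
  congr 1
  ext t
  simp only [mem_image, mem_ofPred_eq, gridAdm, anc_idx]
  constructor
  · rintro ⟨k, ⟨hk, hA⟩, rfl⟩
    exact ⟨-n + k, ⟨hA, by omega, by omega⟩, (avg_cavg _ _ _ (hA.integrableOn hf)).symm⟩
  · rintro ⟨s, ⟨hA, h1, h2⟩, rfl⟩
    obtain ⟨k, hk⟩ : ∃ k : ℕ, s = -n + k := ⟨(s + n).toNat, by omega⟩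
    subst hk
    exact ⟨k, ⟨by omega, hA⟩, avg_cavg _ _ _ (hA.integrableOn hf)⟩

theorem finite_gridAvgs (Ω : Set (Ed d)) (f : Ed d → ℝ) (n : ℕ) (y : Ed d) :
    ((fun s => cavg f s (idx s y)) '' {s | Adm Ω s (idx s y) ∧ -n ≤ s ∧ s ≤ n}).Finite :=
  ((Set.finite_Icc (-n : ℤ) n).subset fun _ hs => hs.2).image _

theorem cavg_le_gridMax {Ω : Set (Ed d)} {f : Ed d → ℝ} (hf : LocallyIntegrableOn f Ω) {n : ℕ}
    {y : Ed d} {s : ℤ} (hs : Adm Ω s (idx s y)) (h1 : -n ≤ s) (h2 : s ≤ n) :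
    cavg f s (idx s y) ≤ gridMax Ω f n (idx (-n) y) := by
  rw [gridMax_idx hf]
  exact le_csSup (finite_gridAvgs Ω f n y).bddAbove ⟨s, ⟨hs, h1, h2⟩, rfl⟩

theorem gridMax_mono {Ω : Set (Ed d)} {f : Ed d → ℝ} (hf : LocallyIntegrableOn f Ω) {n n' : ℕ}
    (hn : n ≤ n') {y : Ed d} {s : ℤ} (hs : Adm Ω s (idx s y)) (h1 : -n ≤ s) (h2 : s ≤ n) :
    gridMax Ω f n (idx (-n) y) ≤ gridMax Ω f n' (idx (-n') y) := by
  rw [gridMax_idx hf]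
  refine csSup_le ⟨_, s, ⟨hs, h1, h2⟩, rfl⟩ ?_
  rintro _ ⟨t, ⟨ht, h1, h2⟩, rfl⟩
  exact cavg_le_gridMax hf ht (by omega) (by omega)

/-- If the averages over the admissible cubes containing `y` are bounded, then the truncated
maximal functions converge at `y`. -/
theorem tendsto_gridMax {Ω : Set (Ed d)} {f : Ed d → ℝ} (hf : LocallyIntegrableOn f Ω) {y : Ed d}
    {s : ℤ} (hs : Adm Ω s (idx s y)) (hb : BddAbove (admAvgs Ω f y)) :
    Tendsto (fun n : ℕ => gridMax Ω f n (idx (-n) y)) atTop (𝓝 (dyadicMaxFun Ω f y)) := by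
  have hle : ∀ n : ℕ, s.natAbs ≤ n → gridMax Ω f n (idx (-n) y) ≤ dyadicMaxFun Ω f y := by
    intro n hn
    rw [gridMax_idx hf, dyadicMaxFun_eq]
    exact csSup_le_csSup hb ⟨_, s, ⟨hs, by omega, by omega⟩, rfl⟩
      (image_mono fun t ht => ht.1)
  rw [tendsto_order]
  constructor
  · intro a ha
    rw [dyadicMaxFun_eq] at ha
    obtain ⟨_, ⟨t, ht, rfl⟩, hat⟩ := exists_lt_of_lt_csSup (s := admAvgs Ω f y) ⟨_, s, hs, rfl⟩ ha
    filter_upwards [eventually_ge_atTop t.natAbs] with n hn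
    exact hat.trans_le (cavg_le_gridMax hf ht (by omega) (by omega))
  · intro a ha
    filter_upwards [eventually_ge_atTop s.natAbs] with n hn
    exact (hle n hn).trans_lt ha

theorem avg_mono {u v : (Fin d → ℤ) → ℝ} {k : ℕ} {m : Fin d → ℤ}
    (h : ∀ x ∈ cube k m, u x ≤ v x) : avg u k m ≤ avg v k m :=
  div_le_div_of_nonneg_right (Finset.sum_le_sum h) (by positivity)

theorem avg_const (c : ℝ) (k : ℕ) (m : Fin d → ℤ) : avg (fun _ => c) k m = c := by
  rw [avg, Finset.sum_const, card_cube, nsmul_eq_mul]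
  push_cast
  exact mul_div_cancel_left₀ _ (by positivity)

theorem abs_cavg_le (f : Ed d → ℝ) (s : ℤ) (m : Fin d → ℤ) :
    |cavg f s m| ≤ cavg (fun y => |f y|) s m := by
  rw [cavg_eq, cavg_eq, abs_div, abs_of_pos (show (0:ℝ) < ((2:ℝ) ^ s) ^ d by positivity)]
  gcongr
  exact abs_integral_le_integral_abs

theorem ofReal_bvar_le_avar {A : (Fin d → ℤ) → Prop} (u : (Fin d → ℤ) → ℝ)
    {B : Finset (Fin d → ℤ)} (hB : ∀ x ∈ B, A x) : ENNReal.ofReal (bvar u B) ≤ avar A u :=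
  (ofReal_bvar_le A u B hB).trans (ENNReal.sum_le_tsum B)

theorem Adm.of_mem_cube {Ω : Set (Ed d)} {s : ℤ} {k : ℕ} {m x : Fin d → ℤ}
    (h : Adm Ω (s + k) m) (hx : x ∈ cube k m) : Adm Ω s x := by
  rw [mem_cube] at hx
  exact Adm.mono (hx ▸ h)

theorem avar_cavg_ne_top {Ω : Set (Ed d)} (hΩ : IsOpen Ω) {f : Ed d → ℝ}
    (hf : LocallyIntegrableOn f Ω) (hvar : var Ω f < ∞) (s : ℤ) :
    avar (Adm Ω s) (cavg f s) ≠ ∞ := by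
  have h := avar_cavg_le hΩ hf hvar s
  have h2 : ENNReal.ofReal (((2:ℝ) ^ s) ^ d) ≠ 0 := by
    rw [Ne, ENNReal.ofReal_eq_zero, not_le]; positivity
  intro htop
  rw [htop, ENNReal.top_mul h2, top_le_iff] at h
  exact ENNReal.mul_ne_top (ENNReal.natCast_ne_top d)
    (ENNReal.mul_ne_top ENNReal.ofReal_ne_top hvar.ne) h

/-- The averages over the admissible cubes containing a given one are bounded. -/
theorem cavg_anc_le {Ω : Set (Ed d)} (hΩ : IsOpen Ω) {f : Ed d → ℝ}
    (hf : LocallyIntegrableOn f Ω) (hvar : var Ω f < ∞) {s : ℤ} {m : Fin d → ℤ} {k : ℕ}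
    (h : Adm Ω (s + k) (anc k m)) :
    cavg f (s + k) (anc k m) ≤ |cavg f s m| + (avar (Adm Ω s) (cavg f s)).toReal := by
  rw [← avg_cavg s k _ (h.integrableOn hf), ← avg_const (|cavg f s m| + _) k (anc k m)]
  refine avg_mono fun x hx => ?_
  have h1 : |cavg f s x - cavg f s m| ≤ bvar (cavg f s) (cube k (anc k m)) :=
    abs_sub_le_bvar _ _ _ hx (mem_cube.2 rfl)
  have h2 : bvar (cavg f s) (cube k (anc k m)) ≤ (avar (Adm Ω s) (cavg f s)).toReal :=
    (ENNReal.ofReal_le_iff_le_toReal (avar_cavg_ne_top hΩ hf hvar s)).1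
      (ofReal_bvar_le_avar _ fun x hx => h.of_mem_cube hx)
  linarith [le_abs_self (cavg f s x - cavg f s m), le_abs_self (cavg f s m)]

/-- A level above which the truncated maximal functions have uniformly bounded integrals. -/
def level (Ω : Set (Ed d)) (f : Ed d → ℝ) (s : ℤ) (m : Fin d → ℤ) : ℝ :=
  1 + |cavg f s m| + (avar (Adm Ω s) (cavg f s)).toReal + 2 * cavg (fun y => |f y|) s m

theorem cavg_abs_nonneg (f : Ed d → ℝ) (s : ℤ) (m : Fin d → ℤ) :
    0 ≤ cavg (fun y => |f y|) s m := (abs_nonneg _).trans (abs_cavg_le f s m)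

theorem level_pos (Ω : Set (Ed d)) (f : Ed d → ℝ) (s : ℤ) (m : Fin d → ℤ) :
    0 < level Ω f s m := by
  have := cavg_abs_nonneg f s m
  unfold level
  positivity

theorem sum_gridMax_sub_level_le (hd : 1 ≤ d) {Ω : Set (Ed d)} (hΩ : IsOpen Ω) {f : Ed d → ℝ}
    (hf : LocallyIntegrableOn f Ω) (hvar : var Ω f < ∞) (n k₀ : ℕ) {m : Fin d → ℤ}
    (hQ : Adm Ω (-n + k₀) m) :
    ∑ x ∈ cube k₀ m, max (gridMax Ω f n x - level Ω f (-n + k₀) m) 0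
      ≤ 2 * 2 ^ k₀ * bvar (gridMax Ω f n) (cube k₀ m) := by
  have hfa : IntegrableOn (fun y => |f y|) (dcube (-n + k₀) m) := (hQ.integrableOn hf).abs
  have h0 := cavg_abs_nonneg f (-n + k₀) m
  refine sum_posPart_sub_le hd (h := fun x => |cavg f (-n) x|) (fun _ => abs_nonneg _)
    (level_pos Ω f _ m) ?_ fun x hx hxB => ?_
  · have h1 : avg (fun x => |cavg f (-n) x|) k₀ m ≤ cavg (fun y => |f y|) (-n + k₀) m := by
      rw [← avg_cavg _ _ _ hfa]
      exact avg_mono fun x _ => abs_cavg_le f _ x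
    have h2 := abs_nonneg (cavg f (-n + k₀) m)
    have h3 : 0 ≤ (avar (Adm Ω (-n + k₀)) (cavg f (-n + k₀))).toReal := ENNReal.toReal_nonneg
    unfold level
    linarith
  · have hA0 : gridAdm Ω n 0 (anc 0 x) := by
      rw [gridAdm_zero, anc_zero]
      exact hQ.of_mem_cube hx
    refine csSup_le ⟨_, 0, hA0, rfl⟩ ?_
    rintro _ ⟨k, ⟨hk, hkA⟩, rfl⟩
    rcases le_or_gt k k₀ with hle | hlt
    · exact (avg_mono fun x _ => le_abs_self _).trans (hxB k hle)
    · obtain ⟨j, rfl⟩ := Nat.exists_eq_add_of_lt hlt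
      rw [mem_cube] at hx
      rw [add_assoc, ← anc_anc, hx] at hkA
      simp only [add_assoc, ← anc_anc k₀, hx]
      rw [avg_cavg _ _ _ (hkA.integrableOn hf)]
      push_cast at hkA ⊢
      rw [← add_assoc] at hkA ⊢
      have := cavg_anc_le hΩ hf hvar (k := j + 1) (by exact_mod_cast hkA)
      push_cast at this
      refine this.trans ?_
      unfold level
      linarith

theorem setLIntegral_gridMax_sub_level_le (hd : 1 ≤ d) {Ω : Set (Ed d)} (hΩ : IsOpen Ω)
    {f : Ed d → ℝ} (hf : LocallyIntegrableOn f Ω) (hvar : var Ω f < ∞) {n : ℕ} {s : ℤ}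
    (hn : -n ≤ s) {m : Fin d → ℤ} (hQ : Adm Ω s m) :
    ∫⁻ y in dcube s m, ENNReal.ofReal (gridMax Ω f n (idx (-n) y) - level Ω f s m)
      ≤ gridConst d * d * (ENNReal.ofReal (2 * 2 ^ s) * var Ω f) := by
  obtain ⟨k, rfl⟩ : ∃ k : ℕ, s = -n + k := ⟨(s + n).toNat, by omega⟩
  set g := gridMax Ω f n
  set B := level Ω f (-n + k) m
  rw [dcube_add_eq, lintegral_biUnion_finset (fun p _ q _ h => dcube_disjoint h)
    (fun p _ => measurableSet_dcube _ p),
    Finset.sum_congr rfl fun x _ =>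
      setLIntegral_comp_idx (-n) (fun x => ENNReal.ofReal (g x - B)) x, ← Finset.sum_mul]
  have h1 : ∑ x ∈ cube k m, ENNReal.ofReal (g x - B)
      ≤ ENNReal.ofReal (2 * 2 ^ k) * avar (Adm Ω (-n)) g := by
    calc ∑ x ∈ cube k m, ENNReal.ofReal (g x - B)
        = ENNReal.ofReal (∑ x ∈ cube k m, max (g x - B) 0) := by
          rw [ENNReal.ofReal_sum_of_nonneg fun _ _ => le_max_right _ _]
          exact Finset.sum_congr rfl fun x _ => by simp [ENNReal.ofReal_max]
      _ ≤ ENNReal.ofReal (2 * 2 ^ k * bvar g (cube k m)) :=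
          ENNReal.ofReal_le_ofReal (sum_gridMax_sub_level_le hd hΩ hf hvar n k hQ)
      _ = ENNReal.ofReal (2 * 2 ^ k) * ENNReal.ofReal (bvar g (cube k m)) :=
          ENNReal.ofReal_mul (by positivity)
      _ ≤ _ := mul_le_mul_right (ofReal_bvar_le_avar _ fun x hx => hQ.of_mem_cube hx) _
  calc _ ≤ ENNReal.ofReal (2 * 2 ^ k) * avar (Adm Ω (-n)) g
        * ENNReal.ofReal (((2:ℝ) ^ (-n : ℤ)) ^ d) := mul_le_mul_left h1 _
    _ ≤ ENNReal.ofReal (2 * 2 ^ k)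
        * (gridConst d * d * (ENNReal.ofReal (2 ^ (-n : ℤ)) * var Ω f)) := by
        rw [mul_assoc]
        exact mul_le_mul_right (avar_gridMax_le hd hΩ hf hvar n) _
    _ = gridConst d * d *
        ((ENNReal.ofReal (2 * 2 ^ k) * ENNReal.ofReal (2 ^ (-n : ℤ))) * var Ω f) := by ring
    _ = _ := by
        rw [← ENNReal.ofReal_mul (by positivity), mul_assoc (2 : ℝ), add_comm (-n : ℤ),
          zpow_add₀ (by norm_num), zpow_natCast]

theorem gridConst_mul_ne_top : gridConst d * d ≠ ∞ :=
  ENNReal.mul_ne_top (gridConst_ne_top d) (ENNReal.natCast_ne_top d)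

/-- The local maximal function is integrable on admissible cubes, and almost everywhere on such a
cube the averages defining it are bounded. -/
theorem integrableOn_dyadicMaxFun_dcube (hd : 1 ≤ d) {Ω : Set (Ed d)} (hΩ : IsOpen Ω)
    {f : Ed d → ℝ} (hf : LocallyIntegrableOn f Ω) (hvar : var Ω f < ∞) {s : ℤ}
    {m : Fin d → ℤ} (hQ : Adm Ω s m) :
    IntegrableOn (dyadicMaxFun Ω f) (dcube s m) ∧
      ∀ᵐ y ∂volume.restrict (dcube s m), BddAbove (admAvgs Ω f y) := by
  set B := level Ω f s m
  set G : ℕ → Ed d → ℝ := fun n y =>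
    gridMax Ω f (s.natAbs + n) (idx (-(s.natAbs + n : ℕ)) y) with hG
  set H : Ed d → ℝ≥0∞ := fun y => ⨆ n, ENNReal.ofReal (G n y - B) with hH
  have hGm : ∀ n, Measurable (G n) := fun n => measurable_comp_idx _ _
  have hmem : ∀ᵐ y ∂volume.restrict (dcube s m), y ∈ dcube s m :=
    ae_restrict_mem (measurableSet_dcube s m)
  have hadm : ∀ y ∈ dcube s m, Adm Ω s (idx s y) := fun y hy => by rwa [mem_dcube.1 hy]
  have hHint : ∫⁻ y in dcube s m, H y
      ≤ gridConst d * d * (ENNReal.ofReal (2 * 2 ^ s) * var Ω f) := by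
    rw [lintegral_iSup' (fun n => ((hGm n).sub_const B).ennreal_ofReal.aemeasurable)]
    · exact iSup_le fun n => setLIntegral_gridMax_sub_level_le hd hΩ hf hvar (by omega) hQ
    · filter_upwards [hmem] with y hy n n' hn
      exact ENNReal.ofReal_le_ofReal (sub_le_sub_right (gridMax_mono hf (by omega)
        (hadm y hy) (by omega) (by omega)) _)
  have htop : gridConst d * d * (ENNReal.ofReal (2 * 2 ^ s) * var Ω f) ≠ ∞ :=
    ENNReal.mul_ne_top gridConst_mul_ne_top
      (ENNReal.mul_ne_top ENNReal.ofReal_ne_top hvar.ne)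
  have hHm : Measurable H := Measurable.iSup fun n => ((hGm n).sub_const B).ennreal_ofReal
  have hHfin : ∀ᵐ y ∂volume.restrict (dcube s m), H y < ∞ :=
    ae_lt_top hHm (ne_top_of_le_ne_top htop hHint)
  have hbdd : ∀ᵐ y ∂volume.restrict (dcube s m), BddAbove (admAvgs Ω f y) := by
    filter_upwards [hHfin] with y hy
    refine ⟨B + (H y).toReal, ?_⟩
    rintro _ ⟨t, ht, rfl⟩
    have h1 : cavg f t (idx t y) ≤ G t.natAbs y :=
      cavg_le_gridMax hf ht (by omega) (by omega)
    have h2 : G t.natAbs y - B ≤ (H y).toReal :=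
      (ENNReal.ofReal_le_iff_le_toReal hy.ne).1
        (le_iSup (fun n => ENNReal.ofReal (G n y - B)) t.natAbs)
    linarith
  have hlim : ∀ᵐ y ∂volume.restrict (dcube s m),
      Tendsto (fun n => G n y) atTop (𝓝 (dyadicMaxFun Ω f y)) := by
    filter_upwards [hmem, hbdd] with y hy hb
    have := (tendsto_gridMax hf (hadm y hy) hb).comp (tendsto_add_atTop_nat s.natAbs)
    refine this.congr fun n => ?_
    simp only [hG, Function.comp, add_comm n]
  refine ⟨⟨aestronglyMeasurable_of_tendsto_ae atTop
    (fun n => (hGm n).aestronglyMeasurable) hlim, ?_⟩, hbdd⟩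
  have hle : ∀ᵐ y ∂volume.restrict (dcube s m),
      ‖dyadicMaxFun Ω f y‖ₑ ≤ ENNReal.ofReal (|cavg f s m| + B) + H y := by
    filter_upwards [hmem, hlim] with y hy hy'
    refine le_of_tendsto' hy'.enorm fun n => ?_
    have h1 : cavg f s m ≤ G n y := by
      have := cavg_le_gridMax hf (n := s.natAbs + n) (hadm y hy) (by omega) (by omega)
      rwa [mem_dcube.1 hy] at this
    have h2 : |G n y| ≤ |cavg f s m| + B + max (G n y - B) 0 := by
      have hB : 0 < B := level_pos Ω f s m
      rw [abs_le]
      constructor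
      · linarith [neg_abs_le (cavg f s m), le_max_right (G n y - B) 0]
      · linarith [abs_nonneg (cavg f s m), le_max_left (G n y - B) 0]
    calc ‖G n y‖ₑ = ENNReal.ofReal |G n y| := by rw [Real.enorm_eq_ofReal_abs]
      _ ≤ ENNReal.ofReal (|cavg f s m| + B + max (G n y - B) 0) := ENNReal.ofReal_le_ofReal h2
      _ ≤ ENNReal.ofReal (|cavg f s m| + B) + ENNReal.ofReal (max (G n y - B) 0) :=
          ENNReal.ofReal_add_le
      _ ≤ _ := by
          gcongr
          rw [ENNReal.ofReal_max, ENNReal.ofReal_zero, max_eq_left (zero_le)]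
          exact le_iSup (fun n => ENNReal.ofReal (G n y - B)) n
  refine (lintegral_mono_ae hle).trans_lt ?_
  rw [lintegral_add_left measurable_const, setLIntegral_const, volume_dcube]
  exact ENNReal.add_lt_top.2 ⟨ENNReal.mul_lt_top ENNReal.ofReal_lt_top ENNReal.ofReal_lt_top,
    hHint.trans_lt htop.lt_top⟩

theorem exists_dist_le_of_mem_dcube (d : ℕ) : ∃ c : ℝ, 0 < c ∧ ∀ (s : ℤ) (m : Fin d → ℤ),
    ∀ y ∈ dcube s m, ∀ z ∈ dcube s m, dist y z ≤ c * 2 ^ s := by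
  obtain ⟨c, hc⟩ : ∃ c, AntilipschitzWith c (WithLp.ofLp : Ed d → Fin d → ℝ) :=
    ⟨_, PiLp.antilipschitzWith_ofLp 2 _⟩
  refine ⟨c + 1, by positivity, fun s m y hy z hz => ?_⟩
  have h1 : dist (WithLp.ofLp y) (WithLp.ofLp z) ≤ 2 ^ s := by
    refine (dist_pi_le_iff (by positivity)).2 fun i => ?_
    have h2 := hy i
    have h3 := hz i
    rw [Real.dist_eq, abs_le]
    constructor <;> linarith [h2.1, h2.2, h3.1, h3.2]
  have h4 : (0:ℝ) ≤ 2 ^ s := by positivity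
  have h5 := hc.le_mul_dist y z
  nlinarith [c.coe_nonneg]

theorem tendsto_two_zpow_neg : Tendsto (fun n : ℕ => (2:ℝ) ^ (-n : ℤ)) atTop (𝓝 0) := by
  have := tendsto_pow_atTop_nhds_zero_of_lt_one (r := (2:ℝ)⁻¹) (by norm_num) (by norm_num)
  simpa using this

/-- Small cubes meeting a compact subset of `Ω` are admissible. -/
theorem eventually_adm {Ω K : Set (Ed d)} (hΩ : IsOpen Ω) (hK : IsCompact K) (hKΩ : K ⊆ Ω) :
    ∀ᶠ n : ℕ in atTop, ∀ y ∈ K, Adm Ω (-n) (idx (-n) y) := by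
  obtain ⟨δ, hδ, hδΩ⟩ := hK.exists_cthickening_subset_open hΩ hKΩ
  obtain ⟨c, hc, hcd⟩ := exists_dist_le_of_mem_dcube d
  have h0 : Tendsto (fun n : ℕ => c * (2:ℝ) ^ (-n : ℤ)) atTop (𝓝 0) := by
    simpa using tendsto_two_zpow_neg.const_mul c
  filter_upwards [h0.eventually (gt_mem_nhds hδ)] with n hn y hy
  refine (closure_minimal (fun z hz => ?_) isClosed_closedBall).trans
    ((closedBall_subset_cthickening hy δ).trans hδΩ)
  exact mem_closedBall.2 ((hcd _ _ z hz y (mem_dcube.2 rfl)).trans hn.le)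

theorem integrableOn_dyadicMaxFun (hd : 1 ≤ d) {Ω : Set (Ed d)} (hΩ : IsOpen Ω)
    {f : Ed d → ℝ} (hf : LocallyIntegrableOn f Ω) (hvar : var Ω f < ∞) {K : Set (Ed d)}
    (hK : IsCompact K) (hKΩ : K ⊆ Ω) :
    IntegrableOn (dyadicMaxFun Ω f) K ∧
      ∀ᵐ y ∂volume.restrict K, BddAbove (admAvgs Ω f y) := by
  obtain ⟨n, hn⟩ := (eventually_adm hΩ hK hKΩ).exists
  have hfin := finite_idx_image (-n) hK.isBounded
  have hsub : K ⊆ ⋃ m ∈ idx (-n) '' K, dcube (-n) m := fun y hy =>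
    mem_iUnion₂.2 ⟨_, ⟨y, hy, rfl⟩, mem_dcube.2 rfl⟩
  have hcube : ∀ m ∈ idx (-n) '' K, _ := fun m hm =>
    integrableOn_dyadicMaxFun_dcube hd hΩ hf hvar (s := -n) (m := m)
      (by obtain ⟨y, hy, rfl⟩ := hm; exact hn y hy)
  exact ⟨((integrableOn_finite_biUnion hfin).2 fun m hm => (hcube m hm).1).mono_set hsub,
    ae_restrict_of_ae_restrict_of_subset hsub
      ((ae_restrict_biUnion_iff _ hfin.countable _).2 fun m hm => (hcube m hm).2)⟩

theorem locallyIntegrableOn_dyadicMaxFun (hd : 1 ≤ d) {Ω : Set (Ed d)} (hΩ : IsOpen Ω)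
    {f : Ed d → ℝ} (hf : LocallyIntegrableOn f Ω) (hvar : var Ω f < ∞) :
    LocallyIntegrableOn (dyadicMaxFun Ω f) Ω :=
  (locallyIntegrableOn_iff hΩ.isLocallyClosed).2 fun _ hKΩ hK =>
    (integrableOn_dyadicMaxFun hd hΩ hf hvar hK hKΩ).1

theorem le_dens {A : (Fin d → ℤ) → Prop} {u : (Fin d → ℤ) → ℝ} {x : Fin d → ℤ} (j : Fin d)
    (hx : A x) (hj : A (nbr j x)) : ENNReal.ofReal |u (nbr j x) - u x| ≤ dens A u x := by
  unfold dens
  refine le_trans (le_of_eq ?_) (Finset.single_le_sum (fun _ _ => zero_le) (Finset.mem_univ j))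
  exact (if_pos ⟨hx, hj⟩).symm

/-- Difference quotients of a test function against a function on the grid are bounded by the
variation of the latter. -/
theorem enorm_integral_mul_sub_le {A : (Fin d → ℤ) → Prop} (u : (Fin d → ℤ) → ℝ) (s : ℤ)
    (j : Fin d) {ψ : Ed d → ℝ} (hψ : Continuous ψ) (hc : HasCompactSupport ψ)
    (h1 : ∀ x, |ψ x| ≤ 1)
    (hA : ∀ y ∈ tsupport ψ, A (idx s y) ∧ A (idx s (y - EuclideanSpace.single j ((2:ℝ) ^ s)))) :
    ‖∫ y, u (idx s y) * (ψ (y + EuclideanSpace.single j ((2:ℝ) ^ s)) - ψ y)‖ₑ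
      ≤ avar A u * ENNReal.ofReal (((2:ℝ) ^ s) ^ d) := by
  set v : Ed d := EuclideanSpace.single j ((2:ℝ) ^ s) with hv
  have hu := locallyIntegrable_comp_idx (d := d) s u
  have hi1 : Integrable fun y => u (idx s y) * ψ y :=
    hu.integrable_smul_right_of_hasCompactSupport hψ hc
  have hi2 : Integrable fun y => u (idx s y) * ψ (y + v) :=
    hu.integrable_smul_right_of_hasCompactSupport (hψ.comp (continuous_id.add continuous_const))
      (hc.comp_homeomorph (Homeomorph.addRight v))
  have hi3 : Integrable fun y => u (idx s (y - v)) * ψ y := by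
    simpa using hi2.comp_sub_right v
  have heq : ∫ y, u (idx s y) * (ψ (y + v) - ψ y)
      = ∫ y, (u (idx s (y - v)) - u (idx s y)) * ψ y := by
    simp only [mul_sub, sub_mul]
    rw [integral_sub hi2 hi1, integral_sub hi3 hi1]
    congr 1
    rw [← integral_sub_right_eq_self _ v]
    simp
  rw [heq]
  refine (enorm_integral_le_lintegral_enorm _).trans ?_
  calc ∫⁻ y, ‖(u (idx s (y - v)) - u (idx s y)) * ψ y‖ₑ
      ≤ ∫⁻ y, dens A u (idx s (y - v)) := by
        refine lintegral_mono fun y => ?_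
        by_cases hy : y ∈ tsupport ψ
        · have hidx : nbr j (idx s (y - v)) = idx s y := by
            rw [← idx_add_single, ← hv, sub_add_cancel]
          have hA' := hA y hy
          calc ‖(u (idx s (y - v)) - u (idx s y)) * ψ y‖ₑ
              ≤ ENNReal.ofReal |u (idx s y) - u (idx s (y - v))| := by
                rw [Real.enorm_eq_ofReal_abs, abs_mul, abs_sub_comm]
                exact ENNReal.ofReal_le_ofReal
                  (mul_le_of_le_one_right (abs_nonneg _) (h1 y))
            _ = ENNReal.ofReal |u (nbr j (idx s (y - v))) - u (idx s (y - v))| := by rw [hidx]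
            _ ≤ _ := le_dens j hA'.2 (hidx ▸ hA'.1)
        · simp [image_eq_zero_of_notMem_tsupport hy]
    _ = ∫⁻ y : Ed d, dens A u (idx s y) :=
        lintegral_sub_right_eq_self (fun y => dens A u (idx s y)) v
    _ = _ := lintegral_comp_idx s _

theorem integral_dyadicMaxFun_mul_fderiv_le (hd : 1 ≤ d) {Ω : Set (Ed d)} (hΩ : IsOpen Ω)
    {f : Ed d → ℝ} (hf : LocallyIntegrableOn f Ω) (hvar : var Ω f < ∞) {ψ : Ed d → ℝ}
    (hψ : ContDiff ℝ 1 ψ) (hc : HasCompactSupport ψ) (hs : tsupport ψ ⊆ Ω)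
    (h1 : ∀ x, |ψ x| ≤ 1) (j : Fin d) :
    ∫ x in Ω, dyadicMaxFun Ω f x * fderiv ℝ ψ x (EuclideanSpace.single j 1)
      ≤ (gridConst d * d * var Ω f).toReal := by
  obtain ⟨δ, hδ, hδΩ⟩ := hc.isCompact.exists_cthickening_subset_open hΩ hs
  set e : Ed d := EuclideanSpace.single j 1 with he
  set K := cthickening δ (tsupport ψ) with hKdef
  have hK : IsCompact K := hc.isCompact.cthickening
  have hSK : tsupport ψ ⊆ K := self_subset_cthickening _
  obtain ⟨hMK, hbdd⟩ := integrableOn_dyadicMaxFun hd hΩ hf hvar hK hδΩ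
  obtain ⟨L, hL⟩ := hψ.lipschitzWith_of_hasCompactSupport hc (by simp)
  set h : ℕ → ℝ := fun n => (2:ℝ) ^ (-n : ℤ) with hh
  have hpos : ∀ n, 0 < h n := fun n => by positivity
  have hsingle : ∀ t : ℝ, EuclideanSpace.single j t = t • e := fun t => by
    ext i; by_cases hi : i = j <;> simp [he, hi]
  have hne : ∀ n, ‖h n • e‖ = h n := fun n => by
    rw [norm_smul, he, PiLp.norm_single]; simp [abs_of_pos (hpos n)]
  set D : ℕ → Ed d → ℝ := fun n y => (h n)⁻¹ * (ψ (y + h n • e) - ψ y) with hD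
  have hDbound : ∀ n y, |D n y| ≤ L := by
    intro n y
    have h2 := hL.dist_le_mul (y + h n • e) y
    rw [dist_self_add_left, hne, Real.dist_eq] at h2
    rw [hD, abs_mul, abs_inv, abs_of_pos (hpos n), inv_mul_le_iff₀ (hpos n), mul_comm]
    exact h2
  have hDlim : ∀ y, Tendsto (fun n => D n y) atTop (𝓝 (fderiv ℝ ψ y e)) := by
    intro y
    have hd := (hψ.differentiable (by simp) y).hasFDerivAt
    have hto : Tendsto (fun n => ‖(h n)⁻¹‖) atTop atTop := by
      refine tendsto_norm_atTop_atTop.comp (Tendsto.inv_tendsto_nhdsGT_zero ?_)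
      exact tendsto_nhdsWithin_iff.2 ⟨tendsto_two_zpow_neg, Eventually.of_forall hpos⟩
    simpa [hD] using hd.lim e hto
  have hsmall : ∀ᶠ n in atTop, h n < δ := tendsto_two_zpow_neg.eventually (gt_mem_nhds hδ)
  have hmemK : ∀ᶠ n in atTop, ∀ y ∈ tsupport ψ, y - h n • e ∈ K := by
    filter_upwards [hsmall] with n hn y hy
    refine mem_cthickening_of_dist_le _ y _ _ hy ?_
    rw [dist_self_sub_left, hne]
    exact hn.le
  have hDK : ∀ᶠ n in atTop, ∀ y ∉ K, D n y = 0 := by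
    filter_upwards [hmemK] with n hn y hy
    have h2 : ψ y = 0 := image_eq_zero_of_notMem_tsupport fun h' => hy (hSK h')
    have h3 : ψ (y + h n • e) = 0 := image_eq_zero_of_notMem_tsupport fun h' => hy <| by
      simpa using hn _ h'
    simp [hD, h2, h3]
  have hadm := eventually_adm hΩ hK hδΩ
  set G : ℕ → Ed d → ℝ := fun n y => gridMax Ω f n (idx (-n) y) with hG
  have hGm : ∀ n, Measurable (G n) := fun n => measurable_comp_idx _ _
  obtain ⟨n₁, hn₁⟩ := hadm.exists
  obtain ⟨c, hc'⟩ := exists_abs_comp_idx_le (-n₁) (cavg f (-n₁)) hK.isBounded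
  have hGlim : ∀ᵐ y ∂volume.restrict K,
      Tendsto (fun n => G n y) atTop (𝓝 (dyadicMaxFun Ω f y)) := by
    filter_upwards [hbdd, ae_restrict_mem hK.measurableSet] with y hb hy
    exact tendsto_gridMax hf (hn₁ y hy) hb
  have hGbound : ∀ n ≥ n₁, ∀ᵐ y ∂volume.restrict K, |G n y| ≤ c + |dyadicMaxFun Ω f y| := by
    intro n hn
    filter_upwards [hGlim, ae_restrict_mem hK.measurableSet] with y hl hy
    have h2 : cavg f (-n₁) (idx (-n₁) y) ≤ G n y :=
      cavg_le_gridMax hf (hn₁ y hy) (by omega) (by omega)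
    have h3 : G n y ≤ dyadicMaxFun Ω f y := ge_of_tendsto hl <| by
      filter_upwards [eventually_ge_atTop n] with n' hn'
      exact gridMax_mono hf hn' (hn₁ y hy) (by omega) (by omega)
    have h4 := abs_le.1 (hc' y hy)
    rw [abs_le]
    constructor
    · linarith [h4.1, abs_nonneg (dyadicMaxFun Ω f y)]
    · linarith [h4.1, h4.2, le_abs_self (dyadicMaxFun Ω f y)]
  have hDm : ∀ n, Continuous (D n) := fun n => by
    have := hψ.continuous
    fun_prop
  have hint : Tendsto (fun n => ∫ y in K, G n y * D n y) atTop
      (𝓝 (∫ y in K, dyadicMaxFun Ω f y * fderiv ℝ ψ y e)) := by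
    refine tendsto_integral_filter_of_dominated_convergence
      (fun y => (c + |dyadicMaxFun Ω f y|) * L) ?_ ?_ ?_ ?_
    · exact Eventually.of_forall fun n =>
        (hGm n).aestronglyMeasurable.mul (hDm n).aestronglyMeasurable
    · filter_upwards [eventually_ge_atTop n₁] with n hn
      filter_upwards [hGbound n hn] with y hy
      rw [norm_mul]
      exact mul_le_mul hy (hDbound n y) (norm_nonneg _) ((abs_nonneg _).trans hy)
    · exact ((integrableOn_const (hs := hK.measure_lt_top.ne)).add hMK.abs).mul_const _
    · filter_upwards [hGlim] with y hy
      exact hy.mul (hDlim y)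
  have hΩK : ∫ x in Ω, dyadicMaxFun Ω f x * fderiv ℝ ψ x e
      = ∫ x in K, dyadicMaxFun Ω f x * fderiv ℝ ψ x e := by
    refine setIntegral_eq_of_subset_of_forall_sdiff_eq_zero hΩ.measurableSet hδΩ fun x hx => ?_
    have hx0 : x ∉ tsupport (fun y => fderiv ℝ ψ y e) := fun h' =>
      hx.2 (hSK (tsupport_fderiv_apply_subset ℝ e h'))
    rw [image_eq_zero_of_notMem_tsupport hx0, mul_zero]
  have htop : gridConst d * d * var Ω f ≠ ∞ := ENNReal.mul_ne_top gridConst_mul_ne_top hvar.ne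
  rw [hΩK]
  refine le_of_tendsto hint ?_
  filter_upwards [hDK, hmemK, hadm] with n hDn hmn han
  rw [setIntegral_eq_integral_of_forall_compl_eq_zero fun y hy => by rw [hDn y hy, mul_zero]]
  have hpull : ∫ y, G n y * D n y = (h n)⁻¹ * ∫ y, G n y * (ψ (y + h n • e) - ψ y) := by
    rw [← integral_const_mul]
    exact integral_congr_ae (Eventually.of_forall fun y => by simp only [hD]; ring)
  have hmain := enorm_integral_mul_sub_le (A := Adm Ω (-n)) (gridMax Ω f n) (-n) j
    hψ.continuous hc h1 fun y hy => ⟨han y (hSK hy), by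
      rw [hsingle]; exact han _ (hmn y hy)⟩
  have hmain2 := hmain.trans (avar_gridMax_le hd hΩ hf hvar n)
  rw [hsingle] at hmain2
  rw [hpull, inv_mul_le_iff₀ (hpos n)]
  refine (le_abs_self _).trans ?_
  have hcast : gridConst d * d * (ENNReal.ofReal (2 ^ (-n : ℤ)) * var Ω f)
      = ENNReal.ofReal (h n) * (gridConst d * d * var Ω f) := by ring
  rw [hcast, Real.enorm_eq_ofReal_abs,
    ENNReal.ofReal_le_iff_le_toReal (ENNReal.mul_ne_top ENNReal.ofReal_ne_top htop),
    ENNReal.toReal_mul, ENNReal.toReal_ofReal (hpos n).le] at hmain2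
  exact hmain2

theorem divergence_eq {φ : Ed d → Ed d} (hφ : ContDiff ℝ 1 φ) (x : Ed d) :
    divergence φ x = ∑ i, fderiv ℝ (fun y => φ y i) x (EuclideanSpace.single i 1) := by
  refine Finset.sum_congr rfl fun i _ => ?_
  have h := (hφ.differentiable (by simp) x).hasFDerivAt
  have h2 : HasFDerivAt (fun y => φ y i) _ x :=
    (EuclideanSpace.proj (𝕜 := ℝ) i).hasFDerivAt.comp x h
  rw [h2.fderiv]
  rfl

theorem var_dyadicMaxFun_le (hd : 1 ≤ d) {Ω : Set (Ed d)} (hΩ : IsOpen Ω)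
    {f : Ed d → ℝ} (hf : LocallyIntegrableOn f Ω) (hvar : var Ω f < ∞) :
    var Ω (dyadicMaxFun Ω f) ≤ d * (gridConst d * d) * var Ω f := by
  refine iSup₂_le fun φ ⟨hφ, hc, hs, h1⟩ => ?_
  have htop : gridConst d * d * var Ω f ≠ ∞ := ENNReal.mul_ne_top gridConst_mul_ne_top hvar.ne
  have hφi : ∀ i, ContDiff ℝ 1 fun y => φ y i := fun i =>
    (EuclideanSpace.proj (𝕜 := ℝ) i).contDiff.comp hφ
  have hsupp : ∀ i, tsupport (fun y => φ y i) ⊆ tsupport φ := fun i =>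
    closure_mono fun y hy h0 => hy (by simp [h0])
  have hci : ∀ i, HasCompactSupport fun y => φ y i := fun i =>
    hc.isCompact.of_isClosed_subset (isClosed_tsupport _) (hsupp i)
  have h1i : ∀ i y, |φ y i| ≤ 1 := fun i y => (PiLp.norm_apply_le (φ y) i).trans (h1 y)
  have hM := (integrableOn_dyadicMaxFun hd hΩ hf hvar hc.isCompact hs).1
  have hint : ∀ i, IntegrableOn (fun x => dyadicMaxFun Ω f x *
      fderiv ℝ (fun y => φ y i) x (EuclideanSpace.single i 1)) Ω := by
    intro i
    have hcont : Continuous fun x =>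
        fderiv ℝ (fun y => φ y i) x (EuclideanSpace.single i (1:ℝ)) :=
      ((hφi i).continuous_fderiv (by simp)).clm_apply continuous_const
    obtain ⟨C, hC⟩ := ((hci i).fderiv_apply ℝ
      (EuclideanSpace.single i (1:ℝ))).exists_bound_of_continuous hcont
    have h2 := hM.mul_bdd hcont.aestronglyMeasurable (Eventually.of_forall hC)
    refine Integrable.integrableOn ((integrableOn_iff_integrable_of_support_subset ?_).1 h2)
    intro x hx
    by_contra hx'
    refine hx ?_
    have hx0 : x ∉ tsupport (fun x =>
        fderiv ℝ (fun y => φ y i) x (EuclideanSpace.single i (1:ℝ))) := fun h' =>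
      hx' (hsupp i (tsupport_fderiv_apply_subset ℝ _ h'))
    simp only [image_eq_zero_of_notMem_tsupport hx0, mul_zero]
  have heq : ∫ x in Ω, dyadicMaxFun Ω f x * divergence φ x
      = ∑ i, ∫ x in Ω, dyadicMaxFun Ω f x *
        fderiv ℝ (fun y => φ y i) x (EuclideanSpace.single i 1) := by
    rw [← integral_finsetSum _ fun i _ => hint i]
    simp only [divergence_eq hφ, Finset.mul_sum]
  have hle := Finset.sum_le_sum fun i (_ : i ∈ (Finset.univ : Finset (Fin d))) =>
    integral_dyadicMaxFun_mul_fderiv_le hd hΩ hf hvar (hφi i) (hci i)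
      ((hsupp i).trans hs) (h1i i) i
  rw [← heq, Finset.sum_const, Finset.card_univ, Fintype.card_fin, nsmul_eq_mul] at hle
  refine (ENNReal.ofReal_le_ofReal hle).trans_eq ?_
  rw [ENNReal.ofReal_mul (by positivity), ENNReal.ofReal_natCast, ENNReal.ofReal_toReal htop]
  ring

end DyadicGrid

/-- Variation of the dyadic maximal function: there is `C = C_d < ∞` such that for every
open `Ω ⊆ ℝ^d` and every `f ∈ L¹_loc(Ω)` with `var_Ω f < ∞`, also `M_Ω f ∈ L¹_loc(Ω)` and
`var_Ω (M_Ω f) ≤ C · var_Ω f`. -/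
theorem variation_of_dyadic_maximal_function (d : ℕ) (hd : 1 ≤ d) :
    ∃ C : ℝ≥0∞, C ≠ ∞ ∧
      ∀ (Ω : Set (Ed d)), IsOpen Ω → ∀ f : Ed d → ℝ,
        LocallyIntegrableOn f Ω volume → var Ω f < ∞ →
          LocallyIntegrableOn (dyadicMaxFun Ω f) Ω volume ∧
          var Ω (dyadicMaxFun Ω f) ≤ C * var Ω f := by
  exact ⟨d * (DyadicGrid.gridConst d * d),
    ENNReal.mul_ne_top (ENNReal.natCast_ne_top d) DyadicGrid.gridConst_mul_ne_top,
    fun Ω hΩ f hf hvar => ⟨DyadicGrid.locallyIntegrableOn_dyadicMaxFun hd hΩ hf hvar,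
      DyadicGrid.var_dyadicMaxFun_le hd hΩ hf hvar⟩⟩

end
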